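/- arXiv:0911.5148 — 2 statements merged into one kernel-verified Lean document; each statement's English description precedes it below -/
import Mathlib

section
/- There exist α₀ ∈ (0, 1/2) and λ > 0 such that the following holds for every α ∈ (0, α₀]. Let s ∈ [1/4, 1/2], let M be a constant with |M| ≤ 1 and 0 < ε₁ ≤ 1, and let θ : ℝ × [−1, 0] → ℝ be continuous, continuously differentiable in t and twice continuously differentiable in x, satisfying ∂_t θ + M θ ∂_x θ + (−Δ)^s θ − ε₁ ∂_{xx} θ = 0 at every point of ℝ × [−1, 0]. Assume |θ| ≤ 1 on Q₁ and |θ(x,t)| ≤ |500 x|^{2α} for all |x| > 1 and t ∈ [−1, 0]. Then osc_{Q_{1/400}} θ ≤ 2 − λ; moreover λ does not depend on ε₁, M or s. -/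
open MeasureTheory Real Set Filter

/-- The normalizing constant of the 1-D fractional Laplacian. -/
noncomputable def fracC (s : ℝ) : ℝ :=
  (4 : ℝ) ^ s * Real.Gamma (1 / 2 + s) / (Real.sqrt Real.pi * |Real.Gamma (-s)|)

/-- The fractional Laplacian `(-Δ)^s u (x)`. -/
noncomputable def fracLap (s : ℝ) (u : ℝ → ℝ) (x : ℝ) : ℝ :=
  fracC s * ∫ y : ℝ, (u x - u y) / |x - y| ^ (1 + 2 * s)

/-- A classical solution of the regularized fractional Burgers equation
`θ_t + θ θ_x + (-Δ)^s θ - ε₁ θ_xx = 0` on a set `D ⊆ ℝ × ℝ` (points written `(x, t)`):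
a bounded continuous function, continuously differentiable in `t` and twice continuously
differentiable in `x`, satisfying the equation at every point of `D`, where the fractional
Laplacian (acting in `x`) is given by an absolutely convergent integral. -/
structure IsClassicalSolution (s ε₁ : ℝ) (θ : ℝ → ℝ → ℝ) (D : Set (ℝ × ℝ)) : Prop where
  bounded : ∃ B : ℝ, ∀ p ∈ D, |θ p.1 p.2| ≤ B
  cont : ContinuousOn (fun p : ℝ × ℝ => θ p.1 p.2) D
  diff_t : ∀ p ∈ D, DifferentiableAt ℝ (fun t => θ p.1 t) p.2
  cont_dt : ContinuousOn (fun p : ℝ × ℝ => deriv (fun t => θ p.1 t) p.2) D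
  diff_x : ∀ p ∈ D, DifferentiableAt ℝ (fun x => θ x p.2) p.1
  diff_xx : ∀ p ∈ D, DifferentiableAt ℝ (deriv fun x => θ x p.2) p.1
  cont_dx : ContinuousOn (fun p : ℝ × ℝ => deriv (fun x => θ x p.2) p.1) D
  cont_dxx : ContinuousOn (fun p : ℝ × ℝ => deriv (deriv fun x => θ x p.2) p.1) D
  integrable : ∀ p ∈ D,
    Integrable fun y : ℝ => (θ p.1 p.2 - θ y p.2) / |p.1 - y| ^ (1 + 2 * s)
  eqn : ∀ p ∈ D,
    deriv (fun t => θ p.1 t) p.2 + θ p.1 p.2 * deriv (fun x => θ x p.2) p.1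
      + fracLap s (fun x => θ x p.2) p.1
      - ε₁ * deriv (deriv fun x => θ x p.2) p.1 = 0

/-!
Freezing the drift `M θ` makes the equation linear, so `θ` and `-θ` are both subsolutions of the
same drift–diffusion equation, and it is enough to push one of them away from `1`. Their deficits
below `1 / 2` on `[-1, 1]` add up to at least `2`, so one of them has a definite deficit, in mean
over `t ∈ [-1/2, -1/4]`. That function stays below the barrier
`1 - A(t) φ_{1/4 - t}(x) + δ (t + 1/2)`, where `φ_r` is a cosine bump of radius `r` and `A` solves a
linear ODE fed by the deficit. At a first contact the nonlocal term sees the deficit, which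
dominates `A'`; the shrinking of the bump at unit speed absorbs the drift; local and nonlocal
diffusion of the bump cost a multiple of `A φ`, covered by damping in the ODE; and the far field
contributes less than `δ` once `α` is small. The constants depend on `s` only through bounds for the
continuous positive function `fracC` on a compact subinterval of `(0, 1)`.
-/

theorem deriv_deriv_nonpos_of_isLocalMax {f : ℝ → ℝ} {x : ℝ} (h : IsLocalMax f x)
    (hc : ContinuousAt f x) : deriv (deriv f) x ≤ 0 := by
  by_contra! hpos
  have hmin : IsLocalMin f x := isLocalMin_of_deriv_deriv_pos hpos h.deriv_eq_zero hc
  have hconst : f =ᶠ[nhds x] fun _ => f x := by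
    filter_upwards [h, hmin] with y hle hge using le_antisymm hle hge
  have hzero : deriv (deriv f) x = 0 := by
    rw [hconst.deriv.deriv_eq]
    simp
  exact hpos.ne' hzero

theorem hasDerivWithinAt_nonpos_of_isMinOn_Icc {f : ℝ → ℝ} {d a t : ℝ} (ha : a < t)
    (hf : HasDerivWithinAt f d (Icc a t) t) (hmin : IsMinOn f (Icc a t) t) : d ≤ 0 := by
  have hcone : a - t ∈ posTangentConeAt (Icc a t) t :=
    sub_mem_posTangentConeAt_of_segment_subset (by rw [segment_symm, segment_eq_Icc ha.le])
  have hslope : 0 ≤ (a - t) * d := by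
    simpa using hmin.localize.hasFDerivWithinAt_nonneg hf.hasFDerivWithinAt hcone
  exact nonpos_of_mul_nonneg_right hslope (sub_neg.2 ha)

theorem deriv_bounds_of_isLocalMax_add_cos {f : ℝ → ℝ} {m k x : ℝ} (hf : Differentiable ℝ f)
    (hf' : DifferentiableAt ℝ (deriv f) x)
    (hmax : IsLocalMax (fun y => f y + m * cos (k * y)) x) :
    deriv f x = m * k * sin (k * x) ∧ deriv (deriv f) x ≤ m * k ^ 2 * cos (k * x) := by
  have hlin : ∀ y, HasDerivAt (fun y => k * y) k y := fun y => by
    simpa using (hasDerivAt_id y).const_mul k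
  have hderiv : ∀ y, HasDerivAt (fun y => f y + m * cos (k * y))
      (deriv f y + m * (-sin (k * y) * k)) y := fun y =>
    (hf y).hasDerivAt.fun_add ((hlin y).cos.const_mul m)
  have hderiv₂ : HasDerivAt (fun y => deriv f y + m * (-sin (k * y) * k))
      (deriv (deriv f) x + m * (-(cos (k * x) * k) * k)) x :=
    hf'.hasDerivAt.fun_add (((hlin x).sin.fun_neg.mul_const k).const_mul m)
  have hfirst := hmax.hasDerivAt_eq_zero (hderiv x)
  have hsecond := deriv_deriv_nonpos_of_isLocalMax hmax (hderiv x).continuousAt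
  rw [funext fun y => (hderiv y).deriv, hderiv₂.deriv] at hsecond
  constructor <;> linarith

section Constant

theorem neg_ne_neg_natCast {s : ℝ} (hs : s ∈ Ioo (0 : ℝ) 1) (n : ℕ) : -s ≠ -n := by
  rw [Ne, neg_inj]
  rintro rfl
  have h₀ : 0 < n := by exact_mod_cast hs.1
  have h₁ : n < 1 := by exact_mod_cast hs.2
  omega

theorem fracC_denominator_pos {s : ℝ} (hs : s ∈ Ioo (0 : ℝ) 1) : 0 < √π * |Gamma (-s)| :=
  mul_pos (sqrt_pos.2 pi_pos) (abs_pos.2 (Gamma_ne_zero (neg_ne_neg_natCast hs)))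

theorem fracC_pos {s : ℝ} (hs : s ∈ Ioo (0 : ℝ) 1) : 0 < fracC s :=
  div_pos (mul_pos (by positivity) (Gamma_pos_of_pos (by linarith [hs.1])))
    (fracC_denominator_pos hs)

theorem continuousOn_fracC : ContinuousOn fracC (Ioo 0 1) := by
  intro s hs
  have hnum : ContinuousAt (fun s => Gamma (1 / 2 + s)) s :=
    ContinuousAt.comp (g := Gamma)
      (differentiableAt_Gamma fun n => by
        have : (0 : ℝ) ≤ n := n.cast_nonneg
        linarith [hs.1]).continuousAt (by fun_prop)
  have hden : ContinuousAt (fun s => Gamma (-s)) s :=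
    ContinuousAt.comp (g := Gamma)
      (differentiableAt_Gamma (neg_ne_neg_natCast hs)).continuousAt (by fun_prop)
  have hpow : ContinuousAt (fun s : ℝ => (4 : ℝ) ^ s) s :=
    (continuous_const_rpow (by norm_num)).continuousAt
  exact ((hpow.mul hnum).div (continuousAt_const.mul hden.abs)
    (fracC_denominator_pos hs).ne').continuousWithinAt

theorem exists_fracC_bounds {s₀ s₁ : ℝ} (hs₀ : 0 < s₀) (hs₁ : s₁ < 1) :
    ∃ a b : ℝ, 0 < a ∧ 0 < b ∧ ∀ s ∈ Icc s₀ s₁, a ≤ fracC s ∧ fracC s ≤ b ∧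
      fracC s / (s * (1 - s)) ≤ b := by
  have hsub : Icc s₀ s₁ ⊆ Ioo 0 1 := Icc_subset_Ioo hs₀ hs₁
  have hcont : ContinuousOn fracC (Icc s₀ s₁) := continuousOn_fracC.mono hsub
  have hden : ∀ s ∈ Ioo (0 : ℝ) 1, 0 < s * (1 - s) := fun s hs =>
    mul_pos hs.1 (sub_pos.2 hs.2)
  obtain ⟨a, ha, hle⟩ := isCompact_Icc.exists_forall_le' hcont fun s hs => fracC_pos (hsub hs)
  obtain ⟨b, hb⟩ := isCompact_Icc.exists_bound_of_continuousOn
    (hcont.div (g := fun s => s * (1 - s)) (by fun_prop) fun s hs => (hden s (hsub hs)).ne')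
  refine ⟨a, max b 1, ha, lt_max_of_lt_right one_pos, fun s hs => ?_⟩
  have hquot : fracC s / (s * (1 - s)) ≤ max b 1 :=
    ((le_abs_self _).trans (hb s hs)).trans (le_max_left b 1)
  have hs' := hsub hs
  have hself : fracC s ≤ fracC s / (s * (1 - s)) :=
    le_div_self (fracC_pos hs').le (hden s hs')
      (mul_le_one₀ hs'.2.le (sub_pos.2 hs'.2).le (by linarith [hs'.1]))
  exact ⟨hle s hs, hself.trans hquot, hquot⟩

end Constant

section Kernel

variable {s : ℝ}

theorem integral_min_sq_one_div_abs_rpow (hs : s ∈ Ioo (0 : ℝ) 1) :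
    ∫ h : ℝ, min (h ^ 2) 1 / |h| ^ (1 + 2 * s) = 1 / (s * (1 - s)) := by
  have hnear : EqOn (fun r : ℝ => min (r ^ 2) 1 / r ^ (1 + 2 * s))
      (fun r => r ^ (1 - 2 * s)) (Ioc 0 1) := fun r hr => by
    have hr₀ : 0 < r := hr.1
    have hsq : min (r ^ 2) 1 = r ^ 2 := min_eq_left (pow_le_one₀ hr₀.le hr.2)
    simp only [hsq]
    rw [← rpow_two, ← rpow_sub hr₀]
    ring_nf
  have hfar : EqOn (fun r : ℝ => min (r ^ 2) 1 / r ^ (1 + 2 * s))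
      (fun r => r ^ (-(1 + 2 * s))) (Ioi 1) := fun r hr => by
    have hr₀ : 0 < r := one_pos.trans hr
    have hone : min (r ^ 2) 1 = 1 := min_eq_right (one_le_pow₀ (le_of_lt hr))
    simp only [hone]
    rw [rpow_neg hr₀.le, one_div]
  have hnear_int : IntegrableOn (fun r : ℝ => r ^ (1 - 2 * s)) (Ioc 0 1) :=
    (intervalIntegrable_iff_integrableOn_Ioc_of_le zero_le_one).1
      (intervalIntegral.intervalIntegrable_rpow' (by linarith [hs.2]))
  have hfar_int : IntegrableOn (fun r : ℝ => r ^ (-(1 + 2 * s))) (Ioi 1) :=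
    integrableOn_Ioi_rpow_of_lt (by linarith [hs.1]) one_pos
  have heven := integral_comp_abs (f := fun r => min (r ^ 2) 1 / r ^ (1 + 2 * s))
  simp only [sq_abs] at heven
  rw [heven, ← Ioc_union_Ioi_eq_Ioi zero_le_one,
    setIntegral_union (Ioc_disjoint_Ioi le_rfl) measurableSet_Ioi
      (hnear_int.congr_fun hnear.symm measurableSet_Ioc)
      (hfar_int.congr_fun hfar.symm measurableSet_Ioi),
    setIntegral_congr_fun measurableSet_Ioc hnear, setIntegral_congr_fun measurableSet_Ioi hfar,
    ← intervalIntegral.integral_of_le zero_le_one, integral_rpow (Or.inl (by linarith [hs.2])),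
    integral_Ioi_rpow_of_lt (by linarith [hs.1]) one_pos,
    zero_rpow (by linarith [hs.2]), one_rpow, one_rpow]
  have h₀ : s ≠ 0 := hs.1.ne'
  have h₁ : 1 - s ≠ 0 := (sub_pos.2 hs.2).ne'
  have h₂ : 1 - 2 * s + 1 ≠ 0 := by linarith [hs.2]
  have h₃ : -(1 + 2 * s) + 1 ≠ 0 := by linarith [hs.1]
  field_simp
  ring

theorem integrable_min_sq_one_div_abs_rpow (hs : s ∈ Ioo (0 : ℝ) 1) :
    Integrable fun h : ℝ => min (h ^ 2) 1 / |h| ^ (1 + 2 * s) :=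
  Integrable.of_integral_ne_zero (by
    rw [integral_min_sq_one_div_abs_rpow hs]
    exact (one_div_pos.2 (mul_pos hs.1 (sub_pos.2 hs.2))).ne')

theorem le_integral_of_touching {x B : ℝ} {u φ ρ : ℝ → ℝ} (hs : s ∈ Ioo (0 : ℝ) 1)
    (hu : Integrable fun y => (u x - u y) / |x - y| ^ (1 + 2 * s)) (hρ : Integrable ρ)
    (hφ : ∀ h, 2 * φ x - φ (x + h) - φ (x - h) ≤ B * min (h ^ 2) 1)
    (htouch : ∀ y ≠ x, (φ y - φ x) / |x - y| ^ (1 + 2 * s) + ρ y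
      ≤ (u x - u y) / |x - y| ^ (1 + 2 * s)) :
    (∫ y, ρ y) - B / (2 * (s * (1 - s))) ≤ ∫ y, (u x - u y) / |x - y| ^ (1 + 2 * s) := by
  -- The quotient of `φ` itself need not be integrable, so the inequality is symmetrised about `x`.
  set I : ℝ → ℝ := fun y => (u x - u y) / |x - y| ^ (1 + 2 * s) with hI
  set κ : ℝ → ℝ := fun h => min (h ^ 2) 1 / |h| ^ (1 + 2 * s)
  have hpair : ∀ᵐ h : ℝ, ρ (x + h) + ρ (x - h) - B * κ h ≤ I (x + h) + I (x - h) := by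
    have hne : ∀ᵐ h : ℝ, h ≠ 0 := by simp [ae_iff]
    filter_upwards [hne] with h hh
    have hplus := htouch (x + h) (by simpa using hh)
    have hminus := htouch (x - h) (by simpa using hh)
    have hcurv : (φ x - φ (x + h)) / |h| ^ (1 + 2 * s) + (φ x - φ (x - h)) / |h| ^ (1 + 2 * s)
        ≤ B * κ h := by
      rw [← add_div, ← mul_div_assoc]
      gcongr
      linarith [hφ h]
    simp only [hI, sub_add_cancel_left, sub_sub_cancel, abs_neg, sub_div] at hplus hminus hcurv ⊢
    linarith
  have hρ₁ : Integrable fun h => ρ (x + h) := hρ.comp_add_left x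
  have hρ₂ : Integrable fun h => ρ (x - h) := hρ.comp_sub_left x
  have hρ₁₂ : Integrable fun h => ρ (x + h) + ρ (x - h) := hρ₁.fun_add hρ₂
  have hI₁ : Integrable fun h => I (x + h) := hu.comp_add_left x
  have hI₂ : Integrable fun h => I (x - h) := hu.comp_sub_left x
  have hκ : Integrable fun h => B * κ h := (integrable_min_sq_one_div_abs_rpow hs).const_mul B
  have hmono := integral_mono_ae (hρ₁₂.sub hκ) (hI₁.add hI₂) hpair
  simp only [Pi.add_apply, Pi.sub_apply] at hmono
  rw [integral_sub hρ₁₂ hκ, integral_add hρ₁ hρ₂, integral_add hI₁ hI₂,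
    integral_const_mul, integral_min_sq_one_div_abs_rpow hs, integral_add_left_eq_self ρ,
    integral_sub_left_eq_self ρ, integral_add_left_eq_self I, integral_sub_left_eq_self I] at hmono
  have hhalf : B / (2 * (s * (1 - s))) = B * (1 / (s * (1 - s))) / 2 := by
    rw [mul_one_div, div_div, mul_comm (s * (1 - s)) 2]
  linarith

end Kernel

section Growth

/-- The quotient `((R |y|) ^ (2α) - 1) / |y| ^ (1 + 2s)` cut off to `1 < |y|`: the excess over `1`
of the admissible growth, weighted by the kernel of `(-Δ)^s` seen from the origin. -/
noncomputable def growthKernel (R s α y : ℝ) : ℝ :=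
  (Ioi 1).indicator (fun r => ((R * r) ^ (2 * α) - 1) / r ^ (1 + 2 * s)) |y|

/-- A bound for the contribution of `1 < |y|` to `(-Δ)^s` at points of `[-3/4, 3/4]`, for functions
growing like `|R y| ^ (2α)`. The factor `4 ^ (1 + 2s)` comes from `|y| / 4 ≤ |x - y|`. -/
noncomputable def growthTail (R s α : ℝ) : ℝ :=
  4 ^ (1 + 2 * s) * (R ^ (2 * α) / (s - α) - 1 / s)

variable {R s α : ℝ}

theorem integral_growthKernel (hR : 0 ≤ R) (hs : 0 < s) (hα : α < s) :
    ∫ y, growthKernel R s α y = R ^ (2 * α) / (s - α) - 1 / s := by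
  have hsplit : EqOn (fun r : ℝ => ((R * r) ^ (2 * α) - 1) / r ^ (1 + 2 * s))
      (fun r => R ^ (2 * α) * r ^ (2 * α - (1 + 2 * s)) - r ^ (-(1 + 2 * s))) (Ioi 1) :=
    fun r hr => by
      have hr₀ : 0 < r := one_pos.trans hr
      simp only [mul_rpow hR hr₀.le, rpow_sub hr₀, rpow_neg hr₀.le]
      ring
  have hgrow : IntegrableOn (fun r : ℝ => r ^ (2 * α - (1 + 2 * s))) (Ioi 1) :=
    integrableOn_Ioi_rpow_of_lt (by linarith) one_pos
  have hkernel : IntegrableOn (fun r : ℝ => r ^ (-(1 + 2 * s))) (Ioi 1) :=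
    integrableOn_Ioi_rpow_of_lt (by linarith) one_pos
  simp only [growthKernel]
  rw [integral_comp_abs
      (f := (Ioi 1).indicator fun r => ((R * r) ^ (2 * α) - 1) / r ^ (1 + 2 * s)),
    setIntegral_indicator measurableSet_Ioi, Ioi_inter_Ioi, sup_of_le_right zero_le_one,
    setIntegral_congr_fun measurableSet_Ioi hsplit, integral_sub (hgrow.const_mul _) hkernel,
    integral_const_mul, integral_Ioi_rpow_of_lt (by linarith) one_pos,
    integral_Ioi_rpow_of_lt (by linarith) one_pos, one_rpow, one_rpow]
  have h₁ : s - α ≠ 0 := by linarith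
  have h₂ : 2 * α - (1 + 2 * s) + 1 ≠ 0 := by linarith
  have h₃ : -(1 + 2 * s) + 1 ≠ 0 := by linarith
  field_simp
  ring

theorem one_div_lt_rpow_div_sub (hR : 1 ≤ R) (hα : α ∈ Ioo 0 s) :
    1 / s < R ^ (2 * α) / (s - α) :=
  calc 1 / s < 1 / (s - α) := by
        gcongr
        · exact sub_pos.2 hα.2
        · linarith [hα.1]
    _ ≤ R ^ (2 * α) / (s - α) := by
        gcongr
        · exact (sub_pos.2 hα.2).le
        · exact one_le_rpow hR (by linarith [hα.1])

theorem integrable_growthKernel (hR : 1 ≤ R) (hα : α ∈ Ioo 0 s) :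
    Integrable (growthKernel R s α) :=
  Integrable.of_integral_ne_zero (by
    rw [integral_growthKernel (by linarith) (hα.1.trans hα.2) hα.2]
    exact (sub_pos.2 (one_div_lt_rpow_div_sub hR hα)).ne')

theorem growthKernel_of_one_lt_abs (hR : 0 ≤ R) {y : ℝ} (hy : 1 < |y|) :
    growthKernel R s α y = (|R * y| ^ (2 * α) - 1) / |y| ^ (1 + 2 * s) := by
  rw [growthKernel, indicator_of_mem (mem_Ioi.2 hy), abs_mul, abs_of_nonneg hR]

theorem growthKernel_of_abs_le_one {y : ℝ} (hy : |y| ≤ 1) : growthKernel R s α y = 0 :=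
  indicator_of_notMem (s := Ioi (1 : ℝ)) (not_lt.2 hy) _

theorem one_le_abs_mul (hR : 1 ≤ R) {y : ℝ} (hy : 1 < |y|) : 1 ≤ |R * y| := by
  rw [abs_mul]
  exact one_le_mul_of_one_le_of_one_le (hR.trans (le_abs_self R)) hy.le

theorem growth_div_abs_sub_rpow_le (hR : 1 ≤ R) (hs : 0 ≤ s) (hα : 0 ≤ α) {x y : ℝ}
    (hx : |x| ≤ 3 / 4) (hy : 1 < |y|) :
    (|R * y| ^ (2 * α) - 1) / |x - y| ^ (1 + 2 * s)
      ≤ 4 ^ (1 + 2 * s) * growthKernel R s α y := by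
  have hy₀ : 0 < |y| := one_pos.trans hy
  have hdist : |y| / 4 ≤ |x - y| := by
    rw [abs_sub_comm]
    linarith [abs_sub_abs_le_abs_sub y x]
  have hexcess : 0 ≤ |R * y| ^ (2 * α) - 1 :=
    sub_nonneg.2 (one_le_rpow (one_le_abs_mul hR hy) (by linarith))
  calc (|R * y| ^ (2 * α) - 1) / |x - y| ^ (1 + 2 * s)
      ≤ (|R * y| ^ (2 * α) - 1) / (|y| / 4) ^ (1 + 2 * s) := by gcongr
    _ = 4 ^ (1 + 2 * s) * growthKernel R s α y := by
        rw [growthKernel_of_one_lt_abs (by linarith) hy, div_rpow hy₀.le (by norm_num)]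
        field_simp

theorem growthTail_pos (hR : 1 ≤ R) (hα : α ∈ Ioo 0 s) : 0 < growthTail R s α :=
  mul_pos (by positivity) (sub_pos.2 (one_div_lt_rpow_div_sub hR hα))

theorem growthTail_le {s₀ : ℝ} (hs₀ : s₀ ≤ s) (hs : s ≤ 1) (hR : 1 ≤ R) (hα : α ∈ Ioo 0 s₀) :
    growthTail R s α ≤ 64 * (R ^ (2 * α) / (s₀ - α) - 1 / s₀) := by
  have hα' : α ∈ Ioo 0 s := ⟨hα.1, hα.2.trans_le hs₀⟩
  have hs₀_pos : 0 < s₀ := hα.1.trans hα.2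
  have hs_pos : 0 < s := hα'.1.trans hα'.2
  have hden₀ : 0 < s₀ - α := sub_pos.2 hα.2
  have hden : 0 < s - α := sub_pos.2 hα'.2
  have hfactor : (4 : ℝ) ^ (1 + 2 * s) ≤ 64 :=
    calc (4 : ℝ) ^ (1 + 2 * s) ≤ 4 ^ (3 : ℝ) :=
          rpow_le_rpow_of_exponent_le (by norm_num) (by linarith)
      _ = 64 := by norm_num
  have hsplit : ∀ σ, 0 < σ → 0 < σ - α →
      R ^ (2 * α) / (σ - α) - 1 / σ = (R ^ (2 * α) - 1) / (σ - α) + α / (σ * (σ - α)) := by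
    intro σ hσ hσα
    field_simp
    ring
  have hpow : 0 ≤ R ^ (2 * α) - 1 := sub_nonneg.2 (one_le_rpow hR (by linarith [hα.1]))
  have hanti : R ^ (2 * α) / (s - α) - 1 / s ≤ R ^ (2 * α) / (s₀ - α) - 1 / s₀ := by
    rw [hsplit s hs_pos hden, hsplit s₀ hs₀_pos hden₀]
    have := hα.1
    gcongr
  exact mul_le_mul hfactor hanti (sub_nonneg.2 (one_div_lt_rpow_div_sub hR hα').le) (by norm_num)

theorem exists_growthTail_lt {s₀ η : ℝ} (hs₀ : 0 < s₀) (hR : 1 ≤ R) (hη : 0 < η) :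
    ∃ α ∈ Ioo 0 s₀, ∀ s ∈ Icc s₀ 1, growthTail R s α < η := by
  have hcont : ContinuousAt (fun α : ℝ => 64 * (R ^ (2 * α) / (s₀ - α) - 1 / s₀)) 0 := by
    have hpow : ContinuousAt (fun α : ℝ => R ^ (2 * α)) 0 :=
      (continuous_const.rpow (by fun_prop) fun _ => Or.inl (by linarith)).continuousAt
    exact continuousAt_const.mul ((hpow.div (by fun_prop) (by simpa using hs₀.ne')).sub
      continuousAt_const)
  have hsmall : ∀ᶠ α in nhdsWithin 0 (Ioi 0), 64 * (R ^ (2 * α) / (s₀ - α) - 1 / s₀) < η :=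
    (hcont.eventually_lt_const (by simpa using hη)).filter_mono nhdsWithin_le_nhds
  obtain ⟨α, hlt, hα⟩ := (hsmall.and (Ioo_mem_nhdsGT hs₀)).exists
  exact ⟨α, hα, fun s hs => (growthTail_le hs.1 hs.2 hR hα).trans_lt hlt⟩

end Growth

section CosineBump

/-- The first Dirichlet eigenfunction of `-d²/dx²` on `(-r, r)`, normalised to have maximum `1` and
extended by `0`; it is the profile of the barriers. -/
noncomputable def cosBump (r x : ℝ) : ℝ :=
  cos (π / 2 * min (|x| / r) 1)

variable {r x : ℝ}

theorem cosBump_nonneg (hr : 0 < r) : 0 ≤ cosBump r x := by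
  have h₀ : 0 ≤ min (|x| / r) 1 := by positivity
  have h₁ : min (|x| / r) 1 ≤ 1 := min_le_right _ _
  exact cos_nonneg_of_neg_pi_div_two_le_of_le (by nlinarith [pi_pos]) (by nlinarith [pi_pos])

theorem cosBump_le_one : cosBump r x ≤ 1 :=
  cos_le_one _

theorem cosBump_of_le_abs (hr : 0 < r) (hx : r ≤ |x|) : cosBump r x = 0 := by
  rw [cosBump, min_eq_right ((one_le_div hr).2 hx), mul_one, cos_pi_div_two]

theorem cosBump_of_abs_le (hr : 0 < r) (hx : |x| ≤ r) : cosBump r x = cos (π / (2 * r) * x) := by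
  rw [cosBump, min_eq_left ((div_le_one hr).2 hx), ← cos_abs (π / (2 * r) * x), abs_mul,
    abs_of_pos (show 0 < π / (2 * r) by positivity)]
  ring_nf

theorem one_sub_abs_div_le_cosBump (hr : 0 < r) : 1 - |x| / r ≤ cosBump r x := by
  rcases le_total |x| r with hx | hx
  · have hratio : |x| / r ≤ 1 := (div_le_one hr).2 hx
    have hchord := one_sub_mul_le_cos (x := π / 2 * (|x| / r)) (by positivity)
      (by nlinarith [pi_pos])
    rw [cosBump, min_eq_left hratio]
    convert hchord using 2
    field_simp
  · exact (sub_nonpos.2 ((one_le_div hr).2 hx)).trans (cosBump_nonneg hr)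

theorem cos_le_cosBump (hr : 0 < r) (hx : |x| ≤ 3 * r) : cos (π / (2 * r) * x) ≤ cosBump r x := by
  rcases le_total |x| r with hxr | hxr
  · exact (cosBump_of_abs_le hr hxr).ge
  · rw [cosBump_of_le_abs hr hxr, ← cos_abs, abs_mul,
      abs_of_pos (show 0 < π / (2 * r) by positivity)]
    have hcancel : π / (2 * r) * r = π / 2 := by field_simp
    have hlower := mul_le_mul_of_nonneg_left hxr (show 0 ≤ π / (2 * r) by positivity)
    have hupper := mul_le_mul_of_nonneg_left hx (show 0 ≤ π / (2 * r) by positivity)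
    exact cos_nonpos_of_pi_div_two_le_of_le (by linarith) (by linarith)

theorem cosBump_second_difference_le_sq (hr : 0 < r) (hx : |x| ≤ r) (h : ℝ) :
    2 * cosBump r x - cosBump r (x + h) - cosBump r (x - h)
      ≤ (π / (2 * r) * h) ^ 2 * cosBump r x := by
  have hφ : 0 ≤ cosBump r x := cosBump_nonneg hr
  rcases le_total |h| (2 * r) with hh | hh
  · have hplus := cos_le_cosBump (x := x + h) hr (by linarith [abs_add_le x h])
    have hminus := cos_le_cosBump (x := x - h) hr (by linarith [abs_sub x h])
    rw [mul_add, cos_add, ← cosBump_of_abs_le hr hx] at hplus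
    rw [mul_sub, cos_sub, ← cosBump_of_abs_le hr hx] at hminus
    have hcos := mul_le_mul_of_nonneg_left (one_sub_sq_div_two_le_cos (x := π / (2 * r) * h)) hφ
    linarith
  · have hcancel : π / (2 * r) * (2 * r) = π := by field_simp
    have hlarge : 2 ≤ |π / (2 * r) * h| := by
      rw [abs_mul, abs_of_pos (show 0 < π / (2 * r) by positivity)]
      have := mul_le_mul_of_nonneg_left hh (show 0 ≤ π / (2 * r) by positivity)
      linarith [pi_gt_three]
    have hsq : 2 ≤ (π / (2 * r) * h) ^ 2 := by
      rw [← sq_abs]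
      nlinarith
    linarith [mul_le_mul_of_nonneg_right hsq hφ, cosBump_nonneg (x := x + h) hr,
      cosBump_nonneg (x := x - h) hr]

theorem pi_div_two_mul_le (hr : 1 / 4 ≤ r) : π / (2 * r) ≤ 6.3 := by
  rw [div_le_iff₀ (by linarith)]
  linarith [pi_lt_d2]

theorem pi_div_two_mul_sq_le (hr : 1 / 4 ≤ r) : (π / (2 * r)) ^ 2 ≤ 40 := by
  have hk₀ : 0 ≤ π / (2 * r) := by positivity
  nlinarith [pi_div_two_mul_le hr]

theorem cosBump_second_difference_le (hr : 1 / 4 ≤ r) (hx : |x| ≤ r) (h : ℝ) :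
    2 * cosBump r x - cosBump r (x + h) - cosBump r (x - h)
      ≤ 40 * cosBump r x * min (h ^ 2) 1 := by
  have hr₀ : 0 < r := by linarith
  have hφ : 0 ≤ cosBump r x := cosBump_nonneg hr₀
  rw [mul_min_of_nonneg _ _ (mul_nonneg (by norm_num) hφ)]
  refine le_min ?_ ?_
  · calc _ ≤ (π / (2 * r) * h) ^ 2 * cosBump r x := cosBump_second_difference_le_sq hr₀ hx h
      _ = (π / (2 * r)) ^ 2 * (cosBump r x * h ^ 2) := by ring
      _ ≤ 40 * (cosBump r x * h ^ 2) := by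
        gcongr
        exact pi_div_two_mul_sq_le hr
      _ = 40 * cosBump r x * h ^ 2 := by ring
  · linarith [cosBump_nonneg (x := x + h) hr₀, cosBump_nonneg (x := x - h) hr₀]

theorem hasDerivAt_cosBump_radius (hx : |x| < r) :
    HasDerivAt (fun ρ => cosBump ρ x) (sin (π / (2 * r) * x) * (π / (2 * r) * x / r)) r := by
  have hr : 0 < r := (abs_nonneg x).trans_lt hx
  have hfreq : HasDerivAt (fun ρ : ℝ => π / (2 * ρ) * x) (-(π / (2 * r) * x / r)) r := by
    have hinv := ((hasDerivAt_id r).const_mul 2).fun_inv (by simpa using hr.ne')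
    refine ((hinv.const_mul π).mul_const x).congr_deriv ?_
    simp only [id_eq]
    field_simp
  have hlocal : (fun ρ => cosBump ρ x) =ᶠ[nhds r] fun ρ => cos (π / (2 * ρ) * x) := by
    filter_upwards [lt_mem_nhds hx] with ρ hρ
    exact cosBump_of_abs_le ((abs_nonneg x).trans_lt hρ) hρ.le
  exact (hfreq.cos.congr_of_eventuallyEq hlocal).congr_deriv (by ring)

/-- Where the bump is small, `|x|` is close to `r`, and shrinking the support at unit speed
outweighs transport by a unit drift. -/
theorem abs_sin_le_deriv_radius_add_cosBump (hr : 0 < r) (hx : |x| ≤ r) :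
    π / (2 * r) * |sin (π / (2 * r) * x)|
      ≤ sin (π / (2 * r) * x) * (π / (2 * r) * x / r) + π / (2 * r) * cosBump r x := by
  set k := π / (2 * r) with hk
  have hk₀ : 0 < k := by positivity
  have hkr : k * r = π / 2 := by
    rw [hk]
    field_simp
  have habs : |sin (k * x)| = sin (k * |x|) := by
    have hkx : |k * x| = k * |x| := by rw [abs_mul, abs_of_pos hk₀]
    rw [abs_sin_eq_sin_abs_of_abs_le_pi, hkx]
    rw [hkx]
    nlinarith [pi_pos]
  have hsign : sin (k * x) * x = |sin (k * x)| * |x| := by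
    rw [habs]
    rcases abs_choice x with h | h
    · rw [h]
    · rw [h, mul_neg k, sin_neg, neg_mul_neg]
  have hone : |sin (k * x)| * (1 - |x| / r) ≤ cosBump r x :=
    (mul_le_of_le_one_left (sub_nonneg.2 ((div_le_one hr).2 hx)) (abs_sin_le_one _)).trans
      (one_sub_abs_div_le_cosBump hr)
  calc k * |sin (k * x)|
      = k * (|sin (k * x)| * |x|) / r + k * (|sin (k * x)| * (1 - |x| / r)) := by ring
    _ ≤ k * (|sin (k * x)| * |x|) / r + k * cosBump r x := by gcongr
    _ = sin (k * x) * (k * x / r) + k * cosBump r x := by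
        rw [← hsign]
        ring

theorem continuousOn_cosBump : ContinuousOn (fun p : ℝ × ℝ => cosBump p.1 p.2) {p | p.1 ≠ 0} :=
  continuous_cos.comp_continuousOn (continuousOn_const.mul
    ((ContinuousOn.div (by fun_prop) (by fun_prop) fun _ hp => hp).inf continuousOn_const))

end CosineBump

section Contact

/-- How far `u` lies below `1 / 2` on `[-1, 1]`, in mean; a quantitative form of the measure of
`{u ≤ 0}` that depends continuously on `u`. -/
noncomputable def deficit (u : ℝ → ℝ) : ℝ :=
  ∫ y in (-1 : ℝ)..1, max (1 / 2 - u y) 0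

variable {R s α x y : ℝ} {u ψ : ℝ → ℝ}

theorem contact_le_of_abs_le_one (hs : s ∈ Ioo (0 : ℝ) 1) (hx : |x| ≤ 1) (hy : |y| ≤ 1)
    (hyx : y ≠ x) (hψ : ψ y ≤ 1 / 2) (hmax : u y + ψ y ≤ u x + ψ x) (hge : 1 ≤ u x + ψ x) :
    (ψ y - ψ x) / |x - y| ^ (1 + 2 * s) + max (1 / 2 - u y) 0 / 8
      ≤ (u x - u y) / |x - y| ^ (1 + 2 * s) := by
  have : 0 < |x - y| := abs_pos.2 (sub_ne_zero.2 hyx.symm)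
  have hdist : |x - y| ≤ 2 := by linarith [abs_sub x y]
  have hkernel : |x - y| ^ (1 + 2 * s) ≤ 8 :=
    calc |x - y| ^ (1 + 2 * s) ≤ 2 ^ (1 + 2 * s) := by
          gcongr
          linarith [hs.1]
      _ ≤ 2 ^ (3 : ℝ) := rpow_le_rpow_of_exponent_le one_le_two (by linarith [hs.2])
      _ = 8 := by norm_num
  have hgap : ψ y - ψ x + max (1 / 2 - u y) 0 ≤ u x - u y := by
    rcases max_cases (1 / 2 - u y) 0 with ⟨h, -⟩ | ⟨h, -⟩ <;> linarith
  calc (ψ y - ψ x) / |x - y| ^ (1 + 2 * s) + max (1 / 2 - u y) 0 / 8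
      ≤ (ψ y - ψ x) / |x - y| ^ (1 + 2 * s) + max (1 / 2 - u y) 0 / |x - y| ^ (1 + 2 * s) := by
        gcongr
    _ ≤ (u x - u y) / |x - y| ^ (1 + 2 * s) := by
        rw [← add_div]
        gcongr

theorem contact_le_of_one_lt_abs (hR : 1 ≤ R) (hs : 0 ≤ s) (hα : 0 ≤ α) (hx : |x| ≤ 3 / 4)
    (hy : 1 < |y|) (hψ : ψ y = 0) (hge : 1 ≤ u x + ψ x) (hgrowth : u y ≤ |R * y| ^ (2 * α)) :
    (ψ y - ψ x) / |x - y| ^ (1 + 2 * s) - 4 ^ (1 + 2 * s) * growthKernel R s α y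
      ≤ (u x - u y) / |x - y| ^ (1 + 2 * s) := by
  rw [sub_le_iff_le_add]
  calc (ψ y - ψ x) / |x - y| ^ (1 + 2 * s)
      ≤ (u x - u y) / |x - y| ^ (1 + 2 * s)
          + (|R * y| ^ (2 * α) - 1) / |x - y| ^ (1 + 2 * s) := by
        rw [← add_div]
        gcongr
        linarith
    _ ≤ (u x - u y) / |x - y| ^ (1 + 2 * s) + 4 ^ (1 + 2 * s) * growthKernel R s α y := by
        gcongr
        exact growth_div_abs_sub_rpow_le hR hs hα hx hy

theorem le_integral_of_contact {B : ℝ} (hs : s ∈ Ioo (0 : ℝ) 1) (hR : 1 ≤ R) (hα : α ∈ Ioo 0 s)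
    (hx : |x| ≤ 3 / 4) (hcont : ContinuousOn u (Icc (-1) 1))
    (hint : Integrable fun y => (u x - u y) / |x - y| ^ (1 + 2 * s))
    (hψ : ∀ y, ψ y ≤ 1 / 2) (hψ₀ : ∀ y, 1 < |y| → ψ y = 0)
    (hcurv : ∀ h, 2 * ψ x - ψ (x + h) - ψ (x - h) ≤ B * min (h ^ 2) 1)
    (hmax : ∀ y ∈ Icc (-1) 1, u y + ψ y ≤ u x + ψ x) (hge : 1 ≤ u x + ψ x)
    (hgrowth : ∀ y, 1 < |y| → u y ≤ |R * y| ^ (2 * α)) :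
    deficit u / 8 - growthTail R s α - B / (2 * (s * (1 - s)))
      ≤ ∫ y, (u x - u y) / |x - y| ^ (1 + 2 * s) := by
  set g : ℝ → ℝ := (Icc (-1) 1).indicator fun y => max (1 / 2 - u y) 0 / 8 with hg
  set G : ℝ → ℝ := fun y => 4 ^ (1 + 2 * s) * growthKernel R s α y with hG
  have hg_int : Integrable g := by
    rw [hg, integrable_indicator_iff measurableSet_Icc]
    exact (((continuousOn_const.sub hcont).sup continuousOn_const).div_const 8).integrableOn_Icc
  have hG_int : Integrable G := (integrable_growthKernel hR hα).const_mul _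
  have htotal : ∫ y, g y - G y = deficit u / 8 - growthTail R s α := by
    rw [integral_sub hg_int hG_int, hg, hG, integral_indicator measurableSet_Icc,
      integral_div, integral_Icc_eq_integral_Ioc,
      ← intervalIntegral.integral_of_le (by norm_num), integral_const_mul,
      integral_growthKernel (by linarith) hs.1 hα.2, deficit, growthTail]
  rw [← htotal]
  refine le_integral_of_touching hs hint (hg_int.sub hG_int) hcurv fun y hyx => ?_
  rcases le_or_gt |y| 1 with hy | hy
  · have hmem : y ∈ Icc (-1 : ℝ) 1 := abs_le.1 hy
    simpa only [hg, hG, indicator_of_mem hmem, growthKernel_of_abs_le_one hy, mul_zero, sub_zero]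
      using contact_le_of_abs_le_one hs (by linarith) hy hyx (hψ y) (hmax y hmem) hge
  · have hmem : y ∉ Icc (-1 : ℝ) 1 := fun h => hy.not_ge (abs_le.2 h)
    simpa only [hg, hG, indicator_of_notMem hmem, zero_sub, ← sub_eq_add_neg] using
      contact_le_of_one_lt_abs hR hs.1.le hα.1.le hx hy (hψ₀ y hy) hge (hgrowth y hy)

end Contact

section Deficit

variable {u : ℝ → ℝ}

theorem deficit_nonneg : 0 ≤ deficit u :=
  intervalIntegral.integral_nonneg (by norm_num) fun _ _ => le_max_right _ _

theorem deficit_le_three (hu : ∀ y ∈ Icc (-1) 1, |u y| ≤ 1) : deficit u ≤ 3 := by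
  have hbound : ∀ y ∈ uIoc (-1 : ℝ) 1, ‖max (1 / 2 - u y) 0‖ ≤ 3 / 2 := fun y hy => by
    rw [uIoc_of_le (by norm_num)] at hy
    rw [norm_of_nonneg (le_max_right _ _)]
    exact max_le (by linarith [(abs_le.1 (hu y (Ioc_subset_Icc_self hy))).1]) (by norm_num)
  calc deficit u ≤ ‖deficit u‖ := le_norm_self _
    _ ≤ 3 / 2 * |1 - -1| := intervalIntegral.norm_integral_le_of_norm_le_const hbound
    _ = 3 := by norm_num

theorem two_le_deficit_add_deficit_neg (hu : ContinuousOn u (Icc (-1) 1)) :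
    2 ≤ deficit u + deficit (fun y => -u y) := by
  have hint : ∀ w : ℝ → ℝ, ContinuousOn w (Icc (-1) 1) →
      IntervalIntegrable (fun y => max (1 / 2 - w y) 0) volume (-1) 1 := fun w hw =>
    ((continuousOn_const.sub hw).sup continuousOn_const).intervalIntegrable_of_Icc (by norm_num)
  calc (2 : ℝ) = ∫ _ in (-1 : ℝ)..1, (1 : ℝ) := by norm_num
    _ ≤ ∫ y in (-1 : ℝ)..1, (max (1 / 2 - u y) 0 + max (1 / 2 - -u y) 0) :=
        intervalIntegral.integral_mono_on (by norm_num) (by simp)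
          ((hint u hu).add (hint _ hu.neg)) fun y _ => by
            linarith [le_max_left (1 / 2 - u y) 0, le_max_left (1 / 2 - -u y) 0]
    _ = deficit u + deficit (fun y => -u y) :=
        intervalIntegral.integral_add (hint u hu) (hint _ hu.neg)

theorem continuousOn_deficit {θ : ℝ → ℝ → ℝ} {T : Set ℝ}
    (hθ : ContinuousOn (fun p : ℝ × ℝ => θ p.1 p.2) (univ ×ˢ T)) :
    ContinuousOn (fun t => deficit fun y => θ y t) T := by
  rw [continuousOn_iff_continuous_domRestrict]
  have hslice : Continuous fun p : T × ℝ => θ p.2 p.1 :=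
    hθ.comp_continuous (f := fun p : T × ℝ => (p.2, (p.1 : ℝ))) (by fun_prop)
      fun p => ⟨mem_univ _, p.1.2⟩
  exact intervalIntegral.continuous_parametric_intervalIntegral_of_continuous'
    (f := fun (t : T) y => max (1 / 2 - θ y t) 0)
    ((continuous_const.sub hslice).max continuous_const) _ _

end Deficit

section Amplitude

theorem hasDerivWithinAt_integral_Icc {f : ℝ → ℝ} {a b t : ℝ} (hf : ContinuousOn f (Icc a b))
    (ht : t ∈ Icc a b) : HasDerivWithinAt (fun u => ∫ τ in a..u, f τ) (f t) (Icc a b) t := by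
  have := Fact.mk ht
  exact intervalIntegral.integral_hasDerivWithinAt_right
    ((hf.mono (Icc_subset_Icc_right ht.2)).intervalIntegrable_of_Icc ht.1)
    (hf.stronglyMeasurableAtFilter_nhdsWithin measurableSet_Icc t) (hf t ht)

/-- The solution of `A' = -K A + c e ^ (-K (t + 1/2)) d` with `A (-1/2) = 0`: the height of the
barrier at time `t` when it is fed by the source `d` and damped at rate `K`. -/
noncomputable def amplitude (c K : ℝ) (d : ℝ → ℝ) (t : ℝ) : ℝ :=
  c * exp (-K * (t + 1 / 2)) * ∫ τ in -(1 / 2)..t, d τ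

variable {c K t : ℝ} {d : ℝ → ℝ}

theorem amplitude_start : amplitude c K d (-(1 / 2)) = 0 := by
  rw [amplitude, intervalIntegral.integral_same, mul_zero]

theorem hasDerivWithinAt_amplitude (hd : ContinuousOn d (Icc (-(1 / 2)) 0))
    (ht : t ∈ Icc (-(1 / 2)) 0) :
    HasDerivWithinAt (amplitude c K d)
      (-K * amplitude c K d t + c * exp (-K * (t + 1 / 2)) * d t) (Icc (-(1 / 2)) 0) t := by
  have hexp : HasDerivAt (fun t => c * exp (-K * (t + 1 / 2)))
      (c * (exp (-K * (t + 1 / 2)) * -K)) t := by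
    simpa only [mul_one] using
      ((((hasDerivAt_id' t).add_const (1 / 2)).const_mul (-K)).exp).const_mul c
  refine (hexp.hasDerivWithinAt.fun_mul (hasDerivWithinAt_integral_Icc hd ht)).congr_deriv ?_
  rw [amplitude]
  ring

theorem amplitude_nonneg (hc : 0 ≤ c) (hd : ∀ τ, 0 ≤ d τ) (ht : -(1 / 2) ≤ t) :
    0 ≤ amplitude c K d t :=
  mul_nonneg (by positivity) (intervalIntegral.integral_nonneg ht fun τ _ => hd τ)

theorem exp_decay_le_one (hK : 0 ≤ K) (ht : -(1 / 2) ≤ t) : exp (-K * (t + 1 / 2)) ≤ 1 :=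
  exp_le_one_iff.2 (by nlinarith)

theorem amplitude_le {D : ℝ} (hc : 0 ≤ c) (hK : 0 ≤ K) (hd : ∀ τ, 0 ≤ d τ)
    (hD : ∀ τ ∈ Icc (-(1 / 2)) 0, d τ ≤ D) (ht : t ∈ Icc (-(1 / 2)) 0) :
    amplitude c K d t ≤ c * (D / 2) := by
  have hbound : ∀ τ ∈ uIoc (-(1 / 2)) t, ‖d τ‖ ≤ D := fun τ hτ => by
    rw [uIoc_of_le ht.1] at hτ
    rw [norm_of_nonneg (hd τ)]
    exact hD τ ⟨hτ.1.le, hτ.2.trans ht.2⟩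
  have hD₀ : 0 ≤ D := (hd t).trans (hD t ht)
  have hint : ∫ τ in -(1 / 2)..t, d τ ≤ D / 2 :=
    calc ∫ τ in -(1 / 2)..t, d τ ≤ ‖∫ τ in -(1 / 2)..t, d τ‖ := le_norm_self _
      _ ≤ D * |t - -(1 / 2)| := intervalIntegral.norm_integral_le_of_norm_le_const hbound
      _ ≤ D / 2 := by
        rw [abs_of_nonneg (by linarith [ht.1])]
        nlinarith [ht.2]
  calc amplitude c K d t ≤ c * 1 * (D / 2) := by
        unfold amplitude
        gcongr
        · exact intervalIntegral.integral_nonneg ht.1 fun τ _ => hd τ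
        · exact exp_decay_le_one hK ht.1
    _ = c * (D / 2) := by rw [mul_one]

theorem le_amplitude {μ : ℝ} (hc : 0 ≤ c) (hK : 0 ≤ K) (hd : ∀ τ, 0 ≤ d τ)
    (hcont : ContinuousOn d (Icc (-(1 / 2)) 0)) (hμ : 0 ≤ μ)
    (hmass : μ ≤ ∫ τ in -(1 / 2)..-(1 / 4), d τ) (ht : t ∈ Icc (-(1 / 4)) 0) :
    c * exp (-K / 2) * μ ≤ amplitude c K d t := by
  have ht₀ : -(1 / 2) ≤ t := by linarith [ht.1]
  have hmono : ∫ τ in -(1 / 2)..-(1 / 4), d τ ≤ ∫ τ in -(1 / 2)..t, d τ :=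
    intervalIntegral.integral_mono_interval le_rfl (by norm_num) ht.1
      (Eventually.of_forall hd)
      ((hcont.mono (Icc_subset_Icc_right ht.2)).intervalIntegrable_of_Icc ht₀)
  unfold amplitude
  gcongr
  · nlinarith [ht.2]
  · exact hmass.trans hmono

end Amplitude

section DriftDiffusion

/-- The operator `∂_t + v ∂_x + (-Δ)^s - ε ∂_xx` with a prescribed drift `v`. Freezing the drift
makes the equation linear, so that `θ` and `-θ` can be treated alike. -/
noncomputable def driftDiffusion (s ε : ℝ) (v θ : ℝ → ℝ → ℝ) (x t : ℝ) : ℝ :=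
  deriv (fun t => θ x t) t + v x t * deriv (fun x => θ x t) x + fracLap s (fun x => θ x t) x
    - ε * deriv (deriv fun x => θ x t) x

/-- The regularity on `ℝ × [-1, 0]` under which every term of `driftDiffusion` is meaningful. -/
structure IsSpacetimeRegular (s : ℝ) (θ : ℝ → ℝ → ℝ) : Prop where
  cont : ContinuousOn (fun p : ℝ × ℝ => θ p.1 p.2) (univ ×ˢ Icc (-1) 0)
  diff_t : ∀ x, ∀ t ∈ Icc (-1) 0, DifferentiableAt ℝ (fun t => θ x t) t
  diff_x : ∀ t ∈ Icc (-1) 0, Differentiable ℝ fun x => θ x t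
  diff_xx : ∀ t ∈ Icc (-1) 0, Differentiable ℝ (deriv fun x => θ x t)
  integrable : ∀ x, ∀ t ∈ Icc (-1) 0,
    Integrable fun y : ℝ => (θ x t - θ y t) / |x - y| ^ (1 + 2 * s)

/-- A regular subsolution of a drift–diffusion equation on `Q₁` whose drift and values are bounded
by `1` there, and which grows at most like `|R x| ^ (2α)` outside. -/
structure IsUnitSubsolution (R s α ε : ℝ) (v θ : ℝ → ℝ → ℝ) : Prop
    extends IsSpacetimeRegular s θ where
  subsolution : ∀ x ∈ Icc (-1) 1, ∀ t ∈ Icc (-1) 0, driftDiffusion s ε v θ x t ≤ 0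
  abs_drift_le : ∀ x ∈ Icc (-1) 1, ∀ t ∈ Icc (-1) 0, |v x t| ≤ 1
  abs_le_one : ∀ x ∈ Icc (-1) 1, ∀ t ∈ Icc (-1) 0, |θ x t| ≤ 1
  growth : ∀ x, 1 < |x| → ∀ t ∈ Icc (-1) 0, θ x t ≤ |R * x| ^ (2 * α)

theorem fracLap_neg (s : ℝ) (u : ℝ → ℝ) (x : ℝ) : fracLap s (fun y => -u y) x = -fracLap s u x := by
  simp only [fracLap, neg_sub_neg, ← neg_sub (u x), neg_div, integral_neg, mul_neg]

theorem driftDiffusion_neg (s ε : ℝ) (v θ : ℝ → ℝ → ℝ) (x t : ℝ) :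
    driftDiffusion s ε v (fun x t => -θ x t) x t = -driftDiffusion s ε v θ x t := by
  simp only [driftDiffusion, fracLap_neg, deriv.fun_neg']
  ring

theorem IsSpacetimeRegular.neg {s : ℝ} {θ : ℝ → ℝ → ℝ} (hθ : IsSpacetimeRegular s θ) :
    IsSpacetimeRegular s fun x t => -θ x t where
  cont := hθ.cont.neg
  diff_t x t ht := (hθ.diff_t x t ht).fun_neg
  diff_x t ht := (hθ.diff_x t ht).fun_neg
  diff_xx t ht := by simpa only [deriv.fun_neg'] using (hθ.diff_xx t ht).fun_neg
  integrable x t ht := by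
    simpa only [neg_sub_neg, ← neg_sub (θ x t), neg_div] using (hθ.integrable x t ht).fun_neg

theorem IsSpacetimeRegular.continuous_slice {s t : ℝ} {θ : ℝ → ℝ → ℝ} (hθ : IsSpacetimeRegular s θ)
    (ht : t ∈ Icc (-1) 0) : Continuous fun x => θ x t :=
  (hθ.diff_x t ht).continuous

end DriftDiffusion

section Barrier

variable {R s α ε : ℝ} {v θ : ℝ → ℝ → ℝ}

/-- The rate at which diffusion, drift and the shrinking of its support damp a cosine barrier of
radius between `1 / 4` and `3 / 4`: `40` bounds the local diffusion, `7` the drift against the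
shrinking, and the last summand the nonlocal diffusion of the bump. -/
noncomputable def dampingRate (s : ℝ) : ℝ :=
  47 + 20 * (fracC s / (s * (1 - s)))

theorem dampingRate_pos (hs : s ∈ Ioo (0 : ℝ) 1) : 0 < dampingRate s := by
  have hC := fracC_pos hs
  have hden : 0 < s * (1 - s) := mul_pos hs.1 (sub_pos.2 hs.2)
  unfold dampingRate
  positivity

theorem IsUnitSubsolution.fracLap_ge_of_contact {x t r m : ℝ}
    (hθ : IsUnitSubsolution R s α ε v θ) (hs : s ∈ Ioo (0 : ℝ) 1) (hR : 1 ≤ R) (hα : α ∈ Ioo 0 s)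
    (ht : t ∈ Icc (-1) 0) (hr : r ∈ Icc (1 / 4) (3 / 4)) (hx : |x| < r)
    (hm : m ∈ Icc 0 (1 / 2))
    (hmax : ∀ y ∈ Icc (-1) 1, θ y t + m * cosBump r y ≤ θ x t + m * cosBump r x)
    (hge : 1 ≤ θ x t + m * cosBump r x) :
    fracC s * (deficit (fun y => θ y t) / 8 - growthTail R s α)
        - 20 * (fracC s / (s * (1 - s))) * (m * cosBump r x)
      ≤ fracLap s (fun y => θ y t) x := by
  have hr₀ : 0 < r := by linarith [hr.1]
  have hC : 0 ≤ fracC s := (fracC_pos hs).le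
  have hψ : ∀ y, m * cosBump r y ≤ 1 / 2 := fun y =>
    (mul_le_of_le_one_right hm.1 cosBump_le_one).trans hm.2
  have hψ₀ : ∀ y, 1 < |y| → m * cosBump r y = 0 := fun y hy => by
    rw [cosBump_of_le_abs hr₀ (by linarith [hr.2]), mul_zero]
  have hcurv : ∀ h, 2 * (m * cosBump r x) - m * cosBump r (x + h) - m * cosBump r (x - h)
      ≤ 40 * (m * cosBump r x) * min (h ^ 2) 1 := fun h => by
    linarith [mul_le_mul_of_nonneg_left (cosBump_second_difference_le hr.1 hx.le h) hm.1]
  have hcontact := le_integral_of_contact hs hR hα (hx.le.trans hr.2)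
    (hθ.continuous_slice ht).continuousOn (hθ.integrable x t ht) hψ hψ₀ hcurv hmax hge
    fun y hy => hθ.growth y hy t ht
  calc fracC s * (deficit (fun y => θ y t) / 8 - growthTail R s α)
        - 20 * (fracC s / (s * (1 - s))) * (m * cosBump r x)
      = fracC s * (deficit (fun y => θ y t) / 8 - growthTail R s α
          - 40 * (m * cosBump r x) / (2 * (s * (1 - s)))) := by
        rw [mul_sub _ _ (40 * _ / _), mul_div_mul_comm]
        ring
    _ ≤ fracLap s (fun y => θ y t) x := mul_le_mul_of_nonneg_left hcontact hC

theorem IsUnitSubsolution.deriv_time_le_of_contact {x t r m : ℝ}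
    (hθ : IsUnitSubsolution R s α ε v θ) (hs : s ∈ Ioo (0 : ℝ) 1) (hR : 1 ≤ R) (hα : α ∈ Ioo 0 s)
    (hε : ε ∈ Icc 0 1) (ht : t ∈ Icc (-1) 0) (hr : r ∈ Icc (1 / 4) (3 / 4)) (hx : |x| < r)
    (hm : m ∈ Icc 0 (1 / 2))
    (hmax : ∀ y ∈ Icc (-1) 1, θ y t + m * cosBump r y ≤ θ x t + m * cosBump r x)
    (hge : 1 ≤ θ x t + m * cosBump r x) :
    deriv (fun t => θ x t) t ≤ m * (π / (2 * r) * |sin (π / (2 * r) * x)|)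
      + (40 + 20 * (fracC s / (s * (1 - s)))) * (m * cosBump r x)
      - fracC s * (deficit (fun y => θ y t) / 8 - growthTail R s α) := by
  have hr₀ : 0 < r := by linarith [hr.1]
  have hx₁ : x ∈ Icc (-1 : ℝ) 1 := abs_le.1 (by linarith [hr.2])
  have hlocal : IsLocalMax (fun y => θ y t + m * cos (π / (2 * r) * y)) x := by
    filter_upwards [continuous_abs.continuousAt.eventually_lt_const hx] with y hy
    rw [← cosBump_of_abs_le hr₀ hy.le, ← cosBump_of_abs_le hr₀ hx.le]
    exact hmax y (abs_le.1 (by linarith [hr.2]))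
  obtain ⟨hθx, hθxx⟩ := deriv_bounds_of_isLocalMax_add_cos (hθ.diff_x t ht)
    (hθ.diff_xx t ht x) hlocal
  have hdrift : -(m * (π / (2 * r) * |sin (π / (2 * r) * x)|))
      ≤ v x t * deriv (fun x => θ x t) x := by
    have habs : |deriv (fun x => θ x t) x| = m * (π / (2 * r) * |sin (π / (2 * r) * x)|) := by
      rw [hθx, abs_mul, abs_mul, abs_of_nonneg hm.1,
        abs_of_pos (show 0 < π / (2 * r) by positivity), mul_assoc]
    refine neg_le_of_abs_le ?_
    rw [abs_mul, ← habs]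
    exact mul_le_of_le_one_left (abs_nonneg _) (hθ.abs_drift_le x hx₁ t ht)
  have hψ : 0 ≤ m * cosBump r x := mul_nonneg hm.1 (cosBump_nonneg hr₀)
  have hdiffusion : ε * deriv (deriv fun x => θ x t) x ≤ 40 * (m * cosBump r x) :=
    calc ε * deriv (deriv fun x => θ x t) x
        ≤ ε * ((π / (2 * r)) ^ 2 * (m * cosBump r x)) := by
          refine mul_le_mul_of_nonneg_left (hθxx.trans_eq ?_) hε.1
          rw [cosBump_of_abs_le hr₀ hx.le]
          ring
      _ ≤ 1 * (40 * (m * cosBump r x)) := by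
          gcongr
          exacts [hε.2, pi_div_two_mul_sq_le hr.1]
      _ = 40 * (m * cosBump r x) := one_mul _
  have hequation := hθ.subsolution x hx₁ t ht
  have hnonlocal := hθ.fracLap_ge_of_contact hs hR hα ht hr hx hm hmax hge
  rw [driftDiffusion] at hequation
  linarith

/-- The height of the barrier `1 - A(t) φ_{1/4 - t}(x) + δ (t + 1/2)` above `θ`. The cosine bump
shrinks from radius `3 / 4` to `1 / 4` as `t` runs through `[-1/2, 0]`. -/
noncomputable def barrierGap (δ : ℝ) (A : ℝ → ℝ) (θ : ℝ → ℝ → ℝ) (x t : ℝ) : ℝ :=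
  1 - θ x t - A t * cosBump (1 / 4 - t) x + δ * (t + 1 / 2)

variable {δ : ℝ} {A A' : ℝ → ℝ}

theorem le_deriv_time_of_isMinOn_barrierGap {x t a : ℝ} (ht : t ∈ Ioc (-(1 / 2)) 0)
    (hx : |x| < 1 / 4 - t) (hA : HasDerivWithinAt A a (Icc (-(1 / 2)) 0) t)
    (hθ : DifferentiableAt ℝ (fun t => θ x t) t)
    (hmin : IsMinOn (barrierGap δ A θ x) (Icc (-(1 / 2)) t) t) :
    δ - a * cosBump (1 / 4 - t) x
        + A t * (sin (π / (2 * (1 / 4 - t)) * x) * (π / (2 * (1 / 4 - t)) * x / (1 / 4 - t)))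
      ≤ deriv (fun t => θ x t) t := by
  have hbump : HasDerivAt (fun t => cosBump (1 / 4 - t) x)
      (-(sin (π / (2 * (1 / 4 - t)) * x) * (π / (2 * (1 / 4 - t)) * x / (1 / 4 - t)))) t :=
    (hasDerivAt_cosBump_radius hx).comp_const_sub (1 / 4) t
  have hgap := ((hθ.hasDerivAt.const_sub 1).hasDerivWithinAt.fun_sub
    ((hA.mono (Icc_subset_Icc_right ht.2)).fun_mul hbump.hasDerivWithinAt)).fun_add
    (((hasDerivAt_id' t).add_const (1 / 2)).const_mul δ).hasDerivWithinAt
  linarith [hasDerivWithinAt_nonpos_of_isMinOn_Icc ht.1 hgap hmin]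

theorem continuousOn_barrierGap
    (hθ : ContinuousOn (fun p : ℝ × ℝ => θ p.1 p.2) (univ ×ˢ Icc (-1) 0))
    (hA : ContinuousOn A (Icc (-(1 / 2)) 0)) :
    ContinuousOn (fun p : ℝ × ℝ => barrierGap δ A θ p.1 p.2)
      (Icc (-1) 1 ×ˢ Icc (-(1 / 2)) 0) := by
  have hθ' := hθ.mono (prod_mono (subset_univ (Icc (-1 : ℝ) 1))
    (Icc_subset_Icc_left (show (-1 : ℝ) ≤ -(1 / 2) by norm_num)))
  have hA' : ContinuousOn (fun p : ℝ × ℝ => A p.2) (Icc (-1) 1 ×ˢ Icc (-(1 / 2)) 0) :=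
    hA.comp continuousOn_snd fun p hp => hp.2
  have hbump : ContinuousOn (fun p : ℝ × ℝ => cosBump (1 / 4 - p.2) p.1)
      (Icc (-1) 1 ×ˢ Icc (-(1 / 2)) 0) :=
    continuousOn_cosBump.comp (f := fun p : ℝ × ℝ => (1 / 4 - p.2, p.1)) (by fun_prop)
      fun p hp => by
        have hneg : p.2 ≤ 0 := hp.2.2
        exact ne_of_gt (by linarith)
  exact ((continuousOn_const.sub hθ').sub (hA'.mul hbump)).add (by fun_prop)

theorem IsUnitSubsolution.slope_le_of_contact {x t a : ℝ} (hθ : IsUnitSubsolution R s α ε v θ)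
    (hs : s ∈ Ioo (0 : ℝ) 1) (hR : 1 ≤ R) (hα : α ∈ Ioo 0 s) (hε : ε ∈ Icc 0 1)
    (ht : t ∈ Ioc (-(1 / 2)) 0) (hx : |x| < 1 / 4 - t)
    (hA : HasDerivWithinAt A a (Icc (-(1 / 2)) 0) t) (hA_mem : A t ∈ Icc 0 (1 / 2))
    (hode : a + dampingRate s * A t ≤ fracC s / 8 * deficit fun y => θ y t)
    (htime : IsMinOn (barrierGap δ A θ x) (Icc (-(1 / 2)) t) t)
    (hspace : ∀ y ∈ Icc (-1) 1, barrierGap δ A θ x t ≤ barrierGap δ A θ y t)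
    (hge : 1 ≤ θ x t + A t * cosBump (1 / 4 - t) x) : δ ≤ fracC s * growthTail R s α := by
  set r := 1 / 4 - t with hr
  set φ := cosBump r x
  have ht' : t ∈ Icc (-1) 0 := ⟨by linarith [ht.1], ht.2⟩
  have hr' : r ∈ Icc (1 / 4) (3 / 4) := ⟨by linarith [ht.2], by linarith [ht.1]⟩
  have hr₀ : 0 < r := by linarith [hr'.1]
  have hmax : ∀ y ∈ Icc (-1) 1, θ y t + A t * cosBump r y ≤ θ x t + A t * cosBump r x :=
    fun y hy => by
      have := hspace y hy
      simp only [barrierGap] at this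
      linarith
  have hlower := le_deriv_time_of_isMinOn_barrierGap ht hx hA (hθ.diff_t x t ht') htime
  have hupper := hθ.deriv_time_le_of_contact hs hR hα hε ht' hr' hx hA_mem hmax hge
  have hφ₀ : 0 ≤ φ := cosBump_nonneg hr₀
  have hψ : 0 ≤ A t * φ := mul_nonneg hA_mem.1 hφ₀
  have hcone := mul_le_mul_of_nonneg_left (abs_sin_le_deriv_radius_add_cosBump hr₀ hx.le) hA_mem.1
  have hwave : π / (2 * r) * (A t * φ) ≤ 7 * (A t * φ) := by
    gcongr
    linarith [pi_div_two_mul_le hr'.1]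
  have hfeed : fracC s / 8 * deficit (fun y => θ y t) * φ
      ≤ fracC s / 8 * deficit fun y => θ y t :=
    mul_le_of_le_one_right (mul_nonneg (by linarith [fracC_pos hs]) deficit_nonneg) cosBump_le_one
  have hode' := mul_le_mul_of_nonneg_right hode hφ₀
  rw [dampingRate] at hode'
  linarith

/-- At a first contact the diffusion gained from the deficit would have to be
outweighed by the far field, which `δ` excludes. -/
theorem IsUnitSubsolution.barrierGap_nonneg (hθ : IsUnitSubsolution R s α ε v θ)
    (hs : s ∈ Ioo (0 : ℝ) 1) (hR : 1 ≤ R) (hα : α ∈ Ioo 0 s) (hε : ε ∈ Icc 0 1)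
    (htail : fracC s * growthTail R s α < δ) (hA_start : A (-(1 / 2)) = 0)
    (hA : ∀ t ∈ Icc (-(1 / 2)) 0, HasDerivWithinAt A (A' t) (Icc (-(1 / 2)) 0) t)
    (hA_mem : ∀ t ∈ Icc (-(1 / 2)) 0, A t ∈ Icc 0 (1 / 2))
    (hode : ∀ t ∈ Icc (-(1 / 2)) 0,
      A' t + dampingRate s * A t ≤ fracC s / 8 * deficit fun y => θ y t) {x t : ℝ}
    (hx : x ∈ Icc (-1) 1) (ht : t ∈ Icc (-(1 / 2)) 0) : 0 ≤ barrierGap δ A θ x t := by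
  obtain ⟨⟨x₀, t₀⟩, ⟨hx₀, ht₀⟩, hmin⟩ := (isCompact_Icc.prod isCompact_Icc).exists_isMinOn
    ⟨(x, t), hx, ht⟩ (continuousOn_barrierGap (δ := δ) hθ.cont fun τ hτ =>
      (hA τ hτ).continuousWithinAt)
  suffices hnonneg : 0 ≤ barrierGap δ A θ x₀ t₀ from
    hnonneg.trans (hmin (a := (x, t)) ⟨hx, ht⟩)
  by_contra! hneg
  have hle : θ x₀ t₀ ≤ 1 :=
    (abs_le.1 (hθ.abs_le_one x₀ hx₀ t₀ ⟨by linarith [ht₀.1], ht₀.2⟩)).2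
  have hδ : 0 ≤ δ := (mul_pos (fracC_pos hs) (growthTail_pos hR hα)).le.trans htail.le
  have hdrop : 0 ≤ δ * (t₀ + 1 / 2) := mul_nonneg hδ (by linarith [ht₀.1])
  have hnegative : 1 - θ x₀ t₀ + δ * (t₀ + 1 / 2) < A t₀ * cosBump (1 / 4 - t₀) x₀ := by
    rw [barrierGap] at hneg
    linarith
  have hlift : 0 < A t₀ * cosBump (1 / 4 - t₀) x₀ := by linarith
  have hstart : -(1 / 2) ≠ t₀ := by
    rintro rfl
    rw [hA_start, zero_mul] at hlift
    exact hlift.false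
  have hinside : |x₀| < 1 / 4 - t₀ := by
    by_contra! hout
    rw [cosBump_of_le_abs (by linarith [ht₀.2]) hout, mul_zero] at hlift
    exact hlift.false
  have htime : IsMinOn (barrierGap δ A θ x₀) (Icc (-(1 / 2)) t₀) t₀ := fun τ hτ =>
    hmin (a := (x₀, τ)) ⟨hx₀, hτ.1, hτ.2.trans ht₀.2⟩
  exact htail.not_ge (hθ.slope_le_of_contact hs hR hα hε ⟨ht₀.1.lt_of_ne hstart, ht₀.2⟩ hinside
    (hA t₀ ht₀) (hA_mem t₀ ht₀) (hode t₀ ht₀) htime (fun y hy => hmin (a := (y, t₀)) ⟨hy, ht₀⟩)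
    (by linarith))

theorem half_le_cosBump {r x : ℝ} (hr : 1 / 4 ≤ r) (hx : |x| ≤ 1 / 8) : 1 / 2 ≤ cosBump r x := by
  have hratio : |x| / r ≤ 1 / 2 := (div_le_iff₀ (by linarith)).2 (by linarith)
  linarith [one_sub_abs_div_le_cosBump (r := r) (x := x) (by linarith)]

theorem IsUnitSubsolution.le_one_sub {c K x t : ℝ} (hθ : IsUnitSubsolution R s α ε v θ)
    (hs : s ∈ Ioo (0 : ℝ) 1) (hR : 1 ≤ R) (hα : α ∈ Ioo 0 s) (hε : ε ∈ Icc 0 1)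
    (hK : dampingRate s ≤ K) (hc : c ∈ Icc 0 (1 / 4)) (hcs : c ≤ fracC s / 8)
    (htail : fracC s * growthTail R s α < c * exp (-K / 2) / 8)
    (hmass : 1 / 4 ≤ ∫ τ in -(1 / 2)..-(1 / 4), deficit fun y => θ y τ)
    (hx : |x| ≤ 1 / 8) (ht : t ∈ Icc (-(1 / 4)) 0) :
    θ x t ≤ 1 - c * exp (-K / 2) / 16 := by
  set d : ℝ → ℝ := fun τ => deficit fun y => θ y τ
  have hd : ∀ τ, 0 ≤ d τ := fun _ => deficit_nonneg
  have hd_cont : ContinuousOn d (Icc (-(1 / 2)) 0) :=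
    (continuousOn_deficit hθ.cont).mono (Icc_subset_Icc_left (by norm_num))
  have hK₀ : 0 ≤ K := (dampingRate_pos hs).le.trans hK
  have hA : ∀ τ ∈ Icc (-(1 / 2)) 0, amplitude c K d τ ∈ Icc 0 (1 / 2) := fun τ hτ =>
    ⟨amplitude_nonneg hc.1 hd hτ.1,
      (amplitude_le (D := 3) hc.1 hK₀ hd (fun σ hσ => deficit_le_three fun y hy =>
        hθ.abs_le_one y hy σ ⟨by linarith [hσ.1], hσ.2⟩) hτ).trans (by linarith [hc.2])⟩
  have hode : ∀ τ ∈ Icc (-(1 / 2)) 0, -K * amplitude c K d τ + c * exp (-K * (τ + 1 / 2)) * d τ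
      + dampingRate s * amplitude c K d τ ≤ fracC s / 8 * d τ := fun τ hτ => by
    have hdamp := mul_le_mul_of_nonneg_right hK (hA τ hτ).1
    have hfeed : c * exp (-K * (τ + 1 / 2)) * d τ ≤ fracC s / 8 * d τ :=
      mul_le_mul_of_nonneg_right
        ((mul_le_of_le_one_right hc.1 (exp_decay_le_one hK₀ hτ.1)).trans hcs) (hd τ)
    linarith
  have hgap := hθ.barrierGap_nonneg hs hR hα hε htail amplitude_start
    (fun τ hτ => hasDerivWithinAt_amplitude hd_cont hτ) hA hode
    (abs_le.1 (hx.trans (by norm_num))) ⟨by linarith [ht.1], ht.2⟩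
  have hE : 0 ≤ c * exp (-K / 2) := mul_nonneg hc.1 (exp_pos _).le
  have hlift : c * exp (-K / 2) * (1 / 4) * (1 / 2) ≤ amplitude c K d t * cosBump (1 / 4 - t) x :=
    mul_le_mul (le_amplitude hc.1 hK₀ hd hd_cont (by norm_num) hmass ht)
      (half_le_cosBump (by linarith [ht.2]) hx) (by norm_num)
      (hA t ⟨by linarith [ht.1], ht.2⟩).1
  rw [barrierGap] at hgap
  nlinarith [ht.2]

end Barrier

section Oscillation

theorem IsSpacetimeRegular.quarter_le_integral_deficit_or {s : ℝ} {θ : ℝ → ℝ → ℝ}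
    (hθ : IsSpacetimeRegular s θ) :
    (1 / 4 ≤ ∫ τ in -(1 / 2)..-(1 / 4), deficit fun y => θ y τ) ∨
      1 / 4 ≤ ∫ τ in -(1 / 2)..-(1 / 4), deficit fun y => -θ y τ := by
  have hsub : Icc (-(1 / 2)) (-(1 / 4)) ⊆ Icc (-1 : ℝ) 0 :=
    Icc_subset_Icc (by norm_num) (by norm_num)
  have hint : ∀ {w : ℝ → ℝ → ℝ}, IsSpacetimeRegular s w →
      IntervalIntegrable (fun τ => deficit fun y => w y τ) volume (-(1 / 2)) (-(1 / 4)) := fun hw =>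
    ((continuousOn_deficit hw.cont).mono hsub).intervalIntegrable_of_Icc (by norm_num)
  have htotal : 1 / 2 ≤ (∫ τ in -(1 / 2)..-(1 / 4), deficit fun y => θ y τ)
      + ∫ τ in -(1 / 2)..-(1 / 4), deficit fun y => -θ y τ :=
    calc (1 / 2 : ℝ) = ∫ _ in (-(1 / 2) : ℝ)..-(1 / 4), (2 : ℝ) := by norm_num
      _ ≤ ∫ τ in -(1 / 2)..-(1 / 4), ((deficit fun y => θ y τ) + deficit fun y => -θ y τ) :=
          intervalIntegral.integral_mono_on (by norm_num) (by simp)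
            ((hint hθ).add (hint hθ.neg)) fun τ hτ =>
              two_le_deficit_add_deficit_neg (hθ.continuous_slice (hsub hτ)).continuousOn
      _ = _ := intervalIntegral.integral_add (hint hθ) (hint hθ.neg)
  by_contra! hsmall
  linarith [hsmall.1, hsmall.2]

theorem exists_barrier_constants {s₀ s₁ R : ℝ} (hs₀ : 0 < s₀) (hs₁ : s₁ < 1) (hR : 1 ≤ R) :
    ∃ α c K : ℝ, α ∈ Ioo 0 (1 / 2) ∧ c ∈ Ioc 0 (1 / 4) ∧ ∀ s ∈ Icc s₀ s₁, α < s ∧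
      dampingRate s ≤ K ∧ c ≤ fracC s / 8 ∧
      fracC s * growthTail R s α < c * exp (-K / 2) / 8 := by
  obtain ⟨a, b, ha, hb, hbounds⟩ := exists_fracC_bounds hs₀ hs₁
  set c := min (1 / 4) (a / 8)
  set K := 47 + 20 * b
  have hc : 0 < c := lt_min (by norm_num) (by linarith)
  obtain ⟨α, hα, htail⟩ := exists_growthTail_lt (s₀ := min s₀ (1 / 2))
    (η := c * exp (-K / 2) / 8 / b) (lt_min hs₀ (by norm_num)) hR (by positivity)
  refine ⟨α, c, K, ⟨hα.1, hα.2.trans_le (min_le_right _ _)⟩, ⟨hc, min_le_left _ _⟩,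
    fun s hs => ?_⟩
  obtain ⟨hlower, hupper, hquot⟩ := hbounds s hs
  have hαs : α < s := hα.2.trans_le ((min_le_left _ _).trans hs.1)
  refine ⟨hαs, ?_, (min_le_right _ _).trans (by linarith), ?_⟩
  · unfold dampingRate
    linarith
  · calc fracC s * growthTail R s α
        ≤ b * growthTail R s α :=
          mul_le_mul_of_nonneg_right hupper (growthTail_pos hR ⟨hα.1, hαs⟩).le
      _ < b * (c * exp (-K / 2) / 8 / b) := by
          gcongr
          exact htail s ⟨(min_le_left _ _).trans hs.1, hs.2.trans hs₁.le⟩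
      _ = c * exp (-K / 2) / 8 := mul_div_cancel₀ _ hb.ne'

theorem isUnitSubsolution_and_neg {R s α α₀ ε : ℝ} {v θ : ℝ → ℝ → ℝ} (hR : 1 ≤ R)
    (hα : α ≤ α₀) (hθ : IsSpacetimeRegular s θ)
    (heqn : ∀ x ∈ Icc (-1) 1, ∀ t ∈ Icc (-1) 0, driftDiffusion s ε v θ x t = 0)
    (hv : ∀ x ∈ Icc (-1) 1, ∀ t ∈ Icc (-1) 0, |v x t| ≤ 1)
    (habs : ∀ x ∈ Icc (-1) 1, ∀ t ∈ Icc (-1) 0, |θ x t| ≤ 1)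
    (hgrowth : ∀ x, 1 < |x| → ∀ t ∈ Icc (-1) 0, |θ x t| ≤ |R * x| ^ (2 * α)) :
    IsUnitSubsolution R s α₀ ε v θ ∧ IsUnitSubsolution R s α₀ ε v fun x t => -θ x t := by
  have hgrowth₀ : ∀ x, 1 < |x| → ∀ t ∈ Icc (-1) 0, |θ x t| ≤ |R * x| ^ (2 * α₀) :=
    fun x hx t ht => (hgrowth x hx t ht).trans
      (rpow_le_rpow_of_exponent_le (one_le_abs_mul hR hx) (by linarith))
  exact
    ⟨{ hθ with
        subsolution := fun x hx t ht => (heqn x hx t ht).le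
        abs_drift_le := hv
        abs_le_one := habs
        growth := fun x hx t ht => (le_abs_self _).trans (hgrowth₀ x hx t ht) },
     { hθ.neg with
        subsolution := fun x hx t ht => by rw [driftDiffusion_neg, heqn x hx t ht, neg_zero]
        abs_drift_le := hv
        abs_le_one := fun x hx t ht => (abs_neg _).trans_le (habs x hx t ht)
        growth := fun x hx t ht => (neg_le_abs _).trans (hgrowth₀ x hx t ht) }⟩

theorem oscillation_lemma_general {s₀ s₁ R : ℝ} (hs₀ : 0 < s₀) (hs₁ : s₁ < 1) (hR : 1 ≤ R) :
    ∃ α₀ lam : ℝ, 0 < α₀ ∧ α₀ < 1 / 2 ∧ 0 < lam ∧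
      ∀ α ≤ α₀, ∀ s ∈ Icc s₀ s₁, ∀ ε ∈ Icc (0 : ℝ) 1, ∀ v θ : ℝ → ℝ → ℝ,
        IsSpacetimeRegular s θ →
        (∀ x ∈ Icc (-1) 1, ∀ t ∈ Icc (-1) 0, driftDiffusion s ε v θ x t = 0) →
        (∀ x ∈ Icc (-1) 1, ∀ t ∈ Icc (-1) 0, |v x t| ≤ 1) →
        (∀ x ∈ Icc (-1) 1, ∀ t ∈ Icc (-1) 0, |θ x t| ≤ 1) →
        (∀ x, 1 < |x| → ∀ t ∈ Icc (-1) 0, |θ x t| ≤ |R * x| ^ (2 * α)) →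
        ∀ x t x' t', |x| ≤ 1 / 8 → t ∈ Icc (-(1 / 4)) 0 → |x'| ≤ 1 / 8 → t' ∈ Icc (-(1 / 4)) 0 →
          θ x t - θ x' t' ≤ 2 - lam := by
  obtain ⟨α₀, c, K, hα₀, hc, hconst⟩ := exists_barrier_constants hs₀ hs₁ hR
  refine ⟨α₀, c * exp (-K / 2) / 16, hα₀.1, hα₀.2, by have := hc.1; positivity, ?_⟩
  intro α hα s hs ε hε v θ hθ heqn hv habs hgrowth x t x' t' hx ht hx' ht'
  obtain ⟨hα₀s, hK, hcs, htail⟩ := hconst s hs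
  obtain ⟨hpos, hneg⟩ := isUnitSubsolution_and_neg hR hα hθ heqn hv habs hgrowth
  have hs' : s ∈ Ioo 0 1 := ⟨hs₀.trans_le hs.1, hs.2.trans_lt hs₁⟩
  have hbound : ∀ {y τ : ℝ}, |y| ≤ 1 / 8 → τ ∈ Icc (-(1 / 4)) 0 → |θ y τ| ≤ 1 := fun hy hτ =>
    habs _ (abs_le.1 (hy.trans (by norm_num))) _ ⟨by linarith [hτ.1], hτ.2⟩
  rcases hθ.quarter_le_integral_deficit_or with hmass | hmass
  · have hupper := hpos.le_one_sub hs' hR ⟨hα₀.1, hα₀s⟩ hε hK ⟨hc.1.le, hc.2⟩ hcs htail hmass hx ht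
    linarith [(abs_le.1 (hbound hx' ht')).1]
  · have hlower := hneg.le_one_sub hs' hR ⟨hα₀.1, hα₀s⟩ hε hK ⟨hc.1.le, hc.2⟩ hcs htail hmass
      hx' ht'
    linarith [(abs_le.1 (hbound hx ht)).2]

theorem one_div_400_rpow_le {s : ℝ} (hs : 1 / 4 ≤ s) : (1 / 400 : ℝ) ^ (2 * s) ≤ 1 / 4 :=
  calc (1 / 400 : ℝ) ^ (2 * s) ≤ (1 / 400) ^ (1 / 2 : ℝ) :=
        rpow_le_rpow_of_exponent_ge (by norm_num) (by norm_num) (by linarith)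
    _ = √((1 / 20) ^ 2) := by rw [← sqrt_eq_rpow]; norm_num
    _ ≤ 1 / 4 := by rw [sqrt_sq (by norm_num)]; norm_num

end Oscillation

/-- the oscillation lemma. For `α` small enough, a solution with `|θ| ≤ 1`
on `Q₁` and `|θ(x,t)| ≤ |500 x|^{2α}` outside has oscillation at most `2 - lam` on
`Q_{1/400}`, where `lam` does not depend on `ε₁`, `M` or `s`. -/
theorem oscillation_lemma :
    ∃ α₀ lam : ℝ, 0 < α₀ ∧ α₀ < 1 / 2 ∧ 0 < lam ∧
      ∀ α : ℝ, 0 < α → α ≤ α₀ →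
      ∀ s M ε₁ : ℝ, s ∈ Set.Icc (1 / 4 : ℝ) (1 / 2) → |M| ≤ 1 →
        0 < ε₁ → ε₁ ≤ 1 →
        ∀ θ : ℝ → ℝ → ℝ,
        -- continuous on ℝ × [-1,0], continuously differentiable in t and twice
        -- continuously differentiable in x there
        ContinuousOn (fun p : ℝ × ℝ => θ p.1 p.2) (Set.univ ×ˢ Set.Icc (-1 : ℝ) 0) →
        (∀ p : ℝ × ℝ, p.2 ∈ Set.Icc (-1 : ℝ) 0 →
          DifferentiableAt ℝ (fun t => θ p.1 t) p.2) →
        ContinuousOn (fun p : ℝ × ℝ => deriv (fun t => θ p.1 t) p.2)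
          (Set.univ ×ˢ Set.Icc (-1 : ℝ) 0) →
        (∀ p : ℝ × ℝ, p.2 ∈ Set.Icc (-1 : ℝ) 0 →
          DifferentiableAt ℝ (fun x => θ x p.2) p.1) →
        (∀ p : ℝ × ℝ, p.2 ∈ Set.Icc (-1 : ℝ) 0 →
          DifferentiableAt ℝ (deriv fun x => θ x p.2) p.1) →
        ContinuousOn (fun p : ℝ × ℝ => deriv (fun x => θ x p.2) p.1)
          (Set.univ ×ˢ Set.Icc (-1 : ℝ) 0) →
        ContinuousOn (fun p : ℝ × ℝ => deriv (deriv fun x => θ x p.2) p.1)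
          (Set.univ ×ˢ Set.Icc (-1 : ℝ) 0) →
        (∀ p : ℝ × ℝ, p.2 ∈ Set.Icc (-1 : ℝ) 0 →
          Integrable fun y : ℝ => (θ p.1 p.2 - θ y p.2) / |p.1 - y| ^ (1 + 2 * s)) →
        -- the equation θ_t + M θ θ_x + (-Δ)^s θ - ε₁ θ_xx = 0 on ℝ × [-1,0]
        (∀ p : ℝ × ℝ, p.2 ∈ Set.Icc (-1 : ℝ) 0 →
          deriv (fun t => θ p.1 t) p.2
            + M * θ p.1 p.2 * deriv (fun x => θ x p.2) p.1
            + fracLap s (fun x => θ x p.2) p.1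
            - ε₁ * deriv (deriv fun x => θ x p.2) p.1 = 0) →
        -- |θ| ≤ 1 on Q₁ = [-1,1] × [-1,0]
        (∀ x ∈ Set.Icc (-1 : ℝ) 1, ∀ t ∈ Set.Icc (-1 : ℝ) 0, |θ x t| ≤ 1) →
        -- growth bound outside
        (∀ x : ℝ, 1 < |x| → ∀ t ∈ Set.Icc (-1 : ℝ) 0,
          |θ x t| ≤ |500 * x| ^ (2 * α)) →
        -- oscillation on Q_{1/400} = [-1/400, 1/400] × [-(1/400)^{2s}, 0]
        ∀ x ∈ Set.Icc (-(1 / 400) : ℝ) (1 / 400),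
          ∀ t ∈ Set.Icc (-((1 / 400 : ℝ) ^ (2 * s))) 0,
            ∀ x' ∈ Set.Icc (-(1 / 400) : ℝ) (1 / 400),
              ∀ t' ∈ Set.Icc (-((1 / 400 : ℝ) ^ (2 * s))) 0,
                θ x t - θ x' t' ≤ 2 - lam := by
  obtain ⟨α₀, lam, hα₀, hα₀', hlam, hosc⟩ := oscillation_lemma_general
    (s₀ := 1 / 4) (s₁ := 1 / 2) (R := 500) (by norm_num) (by norm_num) (by norm_num)
  refine ⟨α₀, lam, hα₀, hα₀', hlam, ?_⟩
  intro α _ hα s M ε₁ hs hM hε₀ hε₁ θ hcont hdiff_t _ hdiff_x hdiff_xx _ _ hint heqn habs hgrowth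
    x hx t ht x' hx' t' ht'
  have hθ : IsSpacetimeRegular s θ :=
    ⟨hcont, fun x t ht => hdiff_t (x, t) ht, fun t ht x => hdiff_x (x, t) ht,
      fun t ht x => hdiff_xx (x, t) ht, fun x t ht => hint (x, t) ht⟩
  have hdrift : ∀ x ∈ Icc (-1) 1, ∀ t ∈ Icc (-1) 0, |M * θ x t| ≤ 1 := fun x hx t ht => by
    rw [abs_mul]
    exact mul_le_one₀ hM (abs_nonneg _) (habs x hx t ht)
  have hspace : ∀ {y : ℝ}, y ∈ Icc (-(1 / 400)) (1 / 400) → |y| ≤ 1 / 8 := fun hy =>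
    (abs_le.2 hy).trans (by norm_num)
  have htime : Icc (-((1 / 400 : ℝ) ^ (2 * s))) 0 ⊆ Icc (-(1 / 4)) 0 :=
    Icc_subset_Icc_left (neg_le_neg (one_div_400_rpow_le hs.1))
  exact hosc α hα s hs ε₁ ⟨hε₀.le, hε₁⟩ (fun x t => M * θ x t) θ hθ
    (fun x _ t ht => heqn (x, t) ht) hdrift habs hgrowth x t x' t' (hspace hx) (htime ht)
    (hspace hx') (htime ht')
end

section
/- For any ρ ∈ (0, 1/400) there exists α₁ ∈ (0, 1/2), depending only on ρ, such that for every α with 0 < α < α₁ the following three inequalities hold: (i) 1 < 1/(400ρ) − (1/ρ)(1 − ρ^α); (ii) ρ^{−α}(2 − ρ^α) < 500^{2α} ( 1/(400ρ) − (1/ρ)(1 − ρ^α) )^{2α}; (iii) ρ^{−α}(500^{2α} + 1 − ρ^α) < 500^{2α} ( 1/ρ − (1/ρ)(1 − ρ^α) )^{2α}. -/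
/-!
The second inequality holds because `2 * x - 1 ≤ x ^ 2` at `x = ρ ^ (-α)`, while
`500 * (1 / (400 * ρ)) > 1 / ρ`. With `a = 1 / ρ` and `b = 500 ^ 2 / ρ` the third one reads
`a ^ α + b ^ α - 1 < (a * b) ^ α * a ^ (-(2 * α ^ 2))`. Its two sides agree to first order at
`α = 0`, and the second order decides: `(a * b) ^ α` exceeds the left side by
`(a ^ α - 1) * (b ^ α - 1) ≥ α ^ 2 * log a * log b`, whereas the factor `a ^ (-(2 * α ^ 2))` costs
only about `2 * α ^ 2 * log a`, and `log b > 2`.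
-/

open Filter Topology

theorem one_add_mul_log_le_rpow {a : ℝ} (ha : 0 < a) (s : ℝ) : 1 + s * Real.log a ≤ a ^ s := by
  rw [Real.rpow_def_of_pos ha, mul_comm s, add_comm]
  exact Real.add_one_le_exp _

theorem two_lt_log_of_nine_le {x : ℝ} (hx : 9 ≤ x) : 2 < Real.log x := by
  rw [Real.lt_log_iff_exp_lt (by linarith)]
  calc Real.exp 2 = Real.exp 1 ^ 2 := by rw [← Real.exp_one_rpow, Real.rpow_two]
    _ < 3 ^ 2 := by
        gcongr
        exact Real.exp_one_lt_three
    _ ≤ x := by linarith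

theorem eventually_lt_sub_mul_one_sub_rpow {ρ m c : ℝ} (hρ : ρ ≠ 0) (hmc : m < c) (b : ℝ) :
    ∀ᶠ α : ℝ in 𝓝 0, m < c - b * (1 - ρ ^ α) := by
  have hcont : Continuous fun α : ℝ ↦ c - b * (1 - ρ ^ α) := by
    have := Real.continuous_const_rpow hρ
    fun_prop
  exact hcont.continuousAt.eventually_const_lt (by simpa using hmc)

theorem rpow_neg_mul_two_sub_rpow_le {ρ : ℝ} (hρ : 0 < ρ) (α : ℝ) :
    ρ ^ (-α) * (2 - ρ ^ α) ≤ ρ⁻¹ ^ (2 * α) := by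
  calc ρ ^ (-α) * (2 - ρ ^ α) = 2 * ρ⁻¹ ^ α - 1 := by
        rw [Real.rpow_neg_eq_inv_rpow, mul_sub, ← Real.mul_rpow (by positivity) hρ.le,
          inv_mul_cancel₀ hρ.ne', Real.one_rpow, mul_comm]
    _ ≤ (ρ⁻¹ ^ α) ^ 2 := by linarith [sq_nonneg (ρ⁻¹ ^ α - 1)]
    _ = ρ⁻¹ ^ (2 * α) := by
        rw [mul_comm, Real.rpow_mul (by positivity), Real.rpow_two]

theorem eventually_rpow_neg_mul_two_sub_rpow_lt {ρ K c : ℝ} (hρ : 0 < ρ) (hK : 0 < K)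
    (hKc : ρ⁻¹ < K * c) (b : ℝ) :
    ∀ᶠ α : ℝ in 𝓝[>] 0,
      ρ ^ (-α) * (2 - ρ ^ α) < K ^ (2 * α) * (c - b * (1 - ρ ^ α)) ^ (2 * α) := by
  have hbase : ρ⁻¹ / K < c := by rwa [div_lt_iff₀' hK]
  filter_upwards [eventually_mem_nhdsWithin,
    nhdsWithin_le_nhds (eventually_lt_sub_mul_one_sub_rpow hρ.ne' hbase b)]
    with α (hα : 0 < α) hαbase
  have hpos : 0 < c - b * (1 - ρ ^ α) := lt_trans (by positivity) hαbase
  calc ρ ^ (-α) * (2 - ρ ^ α) ≤ ρ⁻¹ ^ (2 * α) := rpow_neg_mul_two_sub_rpow_le hρ α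
    _ < (K * (c - b * (1 - ρ ^ α))) ^ (2 * α) := by
        rw [div_lt_iff₀' hK] at hαbase
        gcongr
    _ = K ^ (2 * α) * (c - b * (1 - ρ ^ α)) ^ (2 * α) := Real.mul_rpow hK.le hpos.le

theorem rpow_add_rpow_sub_one_lt {a b c α : ℝ} (ha : 1 < a) (hb : 1 ≤ b) (hα : 0 < α)
    (hc : c * (a * b) ^ α < Real.log b) :
    a ^ α + b ^ α - 1 < (a * b) ^ α * a ^ (-(c * α ^ 2)) := by
  have ha₀ : 0 < a := by linarith
  have hb₀ : 0 < b := by linarith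
  have hloga : 0 < Real.log a := Real.log_pos ha
  have hlogb : 0 ≤ Real.log b := Real.log_nonneg hb
  have hgain : α * Real.log a * (α * Real.log b) ≤ (a ^ α - 1) * (b ^ α - 1) := by
    have hgain_a : α * Real.log a ≤ a ^ α - 1 := by linarith [one_add_mul_log_le_rpow ha₀ α]
    have hgain_b : α * Real.log b ≤ b ^ α - 1 := by linarith [one_add_mul_log_le_rpow hb₀ α]
    exact mul_le_mul hgain_a hgain_b (by positivity) (le_trans (by positivity) hgain_a)
  have hcost : (a * b) ^ α * (1 - a ^ (-(c * α ^ 2))) < α * Real.log a * (α * Real.log b) :=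
    calc (a * b) ^ α * (1 - a ^ (-(c * α ^ 2)))
        ≤ (a * b) ^ α * (c * α ^ 2 * Real.log a) := by
          gcongr
          linarith [one_add_mul_log_le_rpow ha₀ (-(c * α ^ 2))]
      _ = α ^ 2 * Real.log a * (c * (a * b) ^ α) := by ring
      _ < α ^ 2 * Real.log a * Real.log b := by gcongr
      _ = α * Real.log a * (α * Real.log b) := by ring
  have hprod : (a * b) ^ α = a ^ α * b ^ α := Real.mul_rpow ha₀.le hb₀.le
  linarith

theorem eventually_rpow_add_rpow_sub_one_lt {a b c : ℝ} (ha : 1 < a) (hb : 1 ≤ b)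
    (hc : c < Real.log b) :
    ∀ᶠ α : ℝ in 𝓝[>] 0, a ^ α + b ^ α - 1 < (a * b) ^ α * a ^ (-(c * α ^ 2)) := by
  have hcont : Continuous fun α : ℝ ↦ c * (a * b) ^ α :=
    (Real.continuous_const_rpow (by positivity)).const_mul c
  have hsmall : ∀ᶠ α : ℝ in 𝓝 0, c * (a * b) ^ α < Real.log b :=
    hcont.continuousAt.eventually_lt_const (by simpa using hc)
  filter_upwards [eventually_mem_nhdsWithin, nhdsWithin_le_nhds hsmall] with α hα hαc
  exact rpow_add_rpow_sub_one_lt ha hb hα hαc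

theorem eventually_rpow_neg_mul_rpow_add_one_sub_rpow_lt {ρ K : ℝ} (hρ₀ : 0 < ρ) (hρ₁ : ρ < 1)
    (hK : 0 < K) (hlog : 2 < Real.log (K ^ 2 / ρ)) :
    ∀ᶠ α : ℝ in 𝓝[>] 0, ρ ^ (-α) * (K ^ (2 * α) + 1 - ρ ^ α) <
      K ^ (2 * α) * (1 / ρ - (1 / ρ) * (1 - ρ ^ α)) ^ (2 * α) := by
  have hone : 1 ≤ K ^ 2 / ρ := ((Real.log_pos_iff (by positivity)).mp (by linarith)).le
  filter_upwards [eventually_rpow_add_rpow_sub_one_lt (one_lt_inv_iff₀.mpr ⟨hρ₀, hρ₁⟩) hone hlog]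
    with α hα
  have hbase : 1 / ρ - (1 / ρ) * (1 - ρ ^ α) = ρ ^ (α - 1) := by
    rw [Real.rpow_sub_one hρ₀.ne']
    ring
  have hb : (K ^ 2 / ρ) ^ α = K ^ (2 * α) * ρ ^ (-α) := by
    rw [Real.div_rpow (by positivity) hρ₀.le, Real.rpow_mul hK.le, Real.rpow_two,
      Real.rpow_neg hρ₀.le, div_eq_mul_inv]
  calc ρ ^ (-α) * (K ^ (2 * α) + 1 - ρ ^ α) = ρ⁻¹ ^ α + (K ^ 2 / ρ) ^ α - 1 := by
        have hcancel : ρ ^ (-α) * ρ ^ α = 1 := by rw [← Real.rpow_add hρ₀]; simp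
        rw [hb, ← Real.rpow_neg_eq_inv_rpow]
        linear_combination -hcancel
    _ < (ρ⁻¹ * (K ^ 2 / ρ)) ^ α * ρ⁻¹ ^ (-(2 * α ^ 2)) := hα
    _ = K ^ (2 * α) * (ρ ^ (-α) * ρ ^ (-α) * ρ ^ (2 * α ^ 2)) := by
        rw [Real.mul_rpow (by positivity) (by positivity), hb, ← Real.rpow_neg_eq_inv_rpow,
          ← Real.rpow_neg_eq_inv_rpow, neg_neg]
        ring
    _ = K ^ (2 * α) * (1 / ρ - (1 / ρ) * (1 - ρ ^ α)) ^ (2 * α) := by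
        rw [hbase, ← Real.rpow_mul hρ₀.le, ← Real.rpow_add hρ₀, ← Real.rpow_add hρ₀]
        ring_nf

/-- the technical elementary lemma. For any `ρ ∈ (0, 1/400)` there is
`α₁ ∈ (0, 1/2)` such that three explicit inequalities hold for all `0 < α < α₁`. -/
theorem technical_lemma (ρ : ℝ) (hρ0 : 0 < ρ) (hρ : ρ < 1 / 400) :
    ∃ α₁ : ℝ, 0 < α₁ ∧ α₁ < 1 / 2 ∧
      ∀ α : ℝ, 0 < α → α < α₁ →
        (1 < 1 / (400 * ρ) - (1 / ρ) * (1 - ρ ^ α)) ∧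
        (ρ ^ (-α) * (2 - ρ ^ α) <
          (500 : ℝ) ^ (2 * α) *
            (1 / (400 * ρ) - (1 / ρ) * (1 - ρ ^ α)) ^ (2 * α)) ∧
        (ρ ^ (-α) * ((500 : ℝ) ^ (2 * α) + 1 - ρ ^ α) <
          (500 : ℝ) ^ (2 * α) *
            (1 / ρ - (1 / ρ) * (1 - ρ ^ α)) ^ (2 * α)) := by
  have hone : 1 < 1 / (400 * ρ) := by
    rw [one_lt_div (by positivity)]
    linarith
  have hinv : ρ⁻¹ < 500 * (1 / (400 * ρ)) := by
    field_simp
    norm_num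
  have hlog : 2 < Real.log (500 ^ 2 / ρ) :=
    two_lt_log_of_nine_le (by rw [le_div_iff₀ hρ0]; linarith)
  have hfirst : ∀ᶠ α : ℝ in 𝓝[>] 0, 1 < 1 / (400 * ρ) - (1 / ρ) * (1 - ρ ^ α) :=
    (eventually_lt_sub_mul_one_sub_rpow hρ0.ne' hone (1 / ρ)).filter_mono nhdsWithin_le_nhds
  have hsecond := eventually_rpow_neg_mul_two_sub_rpow_lt hρ0 (by norm_num) hinv (1 / ρ)
  have hthird := eventually_rpow_neg_mul_rpow_add_one_sub_rpow_lt hρ0 (by linarith)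
    (by norm_num) hlog
  obtain ⟨α₁, ⟨hpos, hle⟩, hsub⟩ :=
    (mem_nhdsGT_iff_exists_mem_Ioc_Ioo_subset (by norm_num : (0 : ℝ) < 1 / 4)).mp
      (hfirst.and (hsecond.and hthird))
  exact ⟨α₁, hpos, by linarith, fun α hα hαlt ↦ hsub ⟨hα, hαlt⟩⟩
end
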